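/- Fix δ > 0 and ε > 0. Then there exist η > 0 and n₀ such that for all n ≥ n₀ and all M, k with M/N ∈ [δ, 1−δ] and k/n ∈ [δ, 1−δ], with probability at least 1 − exp(−n^η) over G = G_{n,M} the following holds: for all real z₀ ≤ z₁, |P_S(e(S) ∈ [z₀, z₁]) − P(Z ∈ [z₀, z₁])| ≤ n^{−1/4+ε}, where S is a uniformly random k-element subset of [n] and Z is a normal random variable with mean K·M/N and variance λ·n². -/

import Mathlib

/-!
Fix `S` and let `G` contain every edge independently with probability `p = M / N`. Then
`e(S) - K * p` differs from the linear statistic `∑ e, c_S e * (1[e ∈ G] - p)`, where `c_S` is the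
edge indicator of `S` minus its mean `K / N`, by a multiple of `|G| - M`. The two therefore agree
when `G` has exactly `M` edges, and conditioning on this event costs a factor of at most `N + 1`,
since `M` is the mode of the binomial distribution with parameters `N` and `M / N`.

Let `f` be a smoothed indicator of a half-line at scale `L`. The average `F(G)` of `f` over the
values of the linear statistic at uniform `S` has expectation within `O(n² / L³)` of the Gaussian
one by Lindeberg's replacement method. Switching the edge `e` changes `F(G)` by the average over `S`
of `c_S e` times a function bounded by `O(1 / L)`. The covariance matrix of the edge indicators of
a uniform `k`-set has row sums `O(n)`, so by Bessel's inequality the squared gradient of `F` is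
`O(n / L²)`. The Efron–Stein inequality applied to `exp (t * F)` turns this into exponential
concentration of `F` at the scale `√n / L`.

Replacing an interval by smoothed half-lines costs the Gaussian mass `O(L / n)` of intervals of
length `L`, and `L = n ^ (3/4)` balances all three errors at `n ^ (-1/4)`. Since `e(S)` is an
integer, a union bound over `O(N)` half-lines covers all intervals simultaneously.
-/

open Finset MeasureTheory ProbabilityTheory

noncomputable section

/-- Uniform probability of an event `P` over a finite sample space `Ω`. -/
def Pru {α : Type*} (Ω : Finset α) (P : α → Prop) : ℝ := by
  classical exact ((Ω.filter P).card : ℝ) / Ω.card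

/-- Expectation of `f` under the uniform distribution on `Ω`. -/
def Exu {α : Type*} (Ω : Finset α) (f : α → ℝ) : ℝ := (∑ a ∈ Ω, f a) / Ω.card

/-- Variance of `f` under the uniform distribution on `Ω`. -/
def Varu {α : Type*} (Ω : Finset α) (f : α → ℝ) : ℝ := Exu Ω (fun a => (f a - Exu Ω f) ^ 2)

/-- Conditional expectation of `f` given the value of `g`, under uniform distribution on `Ω`. -/
def condExpU {α β : Type*} (Ω : Finset α) (f : α → ℝ) (g : α → β) (ω : α) : ℝ := by
  classical exact Exu (Ω.filter (fun ω' => g ω' = g ω)) f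

/-- The edge set of the complete graph on `[n]`. -/
def completeEdges (n : ℕ) : Finset (Sym2 (Fin n)) := by
  classical exact Finset.univ.filter (fun e => ¬ e.IsDiag)

/-- A finset of `Sym2`s is a graph if it has no loops. -/
def IsGraph {n : ℕ} (G : Finset (Sym2 (Fin n))) : Prop := ∀ e ∈ G, ¬ e.IsDiag

/-- The sample space of `G_{n,M}`: all graphs on `[n]` with exactly `M` edges. -/
def graphsM (n M : ℕ) : Finset (Finset (Sym2 (Fin n))) := by
  classical exact (completeEdges n).powerset.filter (fun G => G.card = M)

/-- `e(S)`: number of edges of `G` with both endpoints in `S`. -/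
def edgesIn {n : ℕ} (G : Finset (Sym2 (Fin n))) (S : Finset (Fin n)) : ℕ := by
  classical exact (G.filter (fun e => ∀ v ∈ e, v ∈ S)).card

/-- `d_S(v)`: number of neighbours of `v` (in graph `G`) lying in `S`. -/
def dS {n : ℕ} (G : Finset (Sym2 (Fin n))) (S : Finset (Fin n)) (v : Fin n) : ℕ := by
  classical exact (S.filter (fun w => s(v, w) ∈ G)).card

/-- All `k`-element subsets of `[n]`. -/
def kSets (n k : ℕ) : Finset (Finset (Fin n)) := Finset.univ.powersetCard k

/-- Probability of an event under the uniform random graph `G_{n,M}`. -/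
def PrGnM (n M : ℕ) (P : Finset (Sym2 (Fin n)) → Prop) : ℝ := Pru (graphsM n M) P

/-- Probability of an event under the binomial random graph `G_{n,p}`. -/
def PrGnp (n : ℕ) (p : ℝ) (P : Finset (Sym2 (Fin n)) → Prop) : ℝ := by
  classical exact ∑ G ∈ (completeEdges n).powerset,
    if (P G) then p ^ G.card * (1 - p) ^ ((completeEdges n).card - G.card) else 0

/-- `N = n(n-1)/2` as a real number. -/
def Nr (n : ℕ) : ℝ := (n : ℝ) * ((n : ℝ) - 1) / 2

/-- `K = k(k-1)/2` as a real number. -/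
def Kr (k : ℕ) : ℝ := (k : ℝ) * ((k : ℝ) - 1) / 2

/-- `λ = ((n²-k²)k²/(2n⁴))·(M(N-M)/N²)`. -/
def lamP (n M k : ℕ) : ℝ :=
  (((n:ℝ)^2 - (k:ℝ)^2) * (k:ℝ)^2 / (2 * (n:ℝ)^4)) * ((M:ℝ) * (Nr n - (M:ℝ)) / (Nr n)^2)

/-- The mean `K·M/N`. -/
def muP (n M k : ℕ) : ℝ := Kr k * (M:ℝ) / Nr n

/-- `W = (e(S) - K·M/N)/n`. -/
def Wfun (n M k : ℕ) (G : Finset (Sym2 (Fin n))) (S : Finset (Fin n)) : ℝ :=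
  ((edgesIn G S : ℝ) - muP n M k) / n

/-- `V = Σ_v d(v)² - n·d(G)²`, i.e. `n` times the degree variance. -/
def Vdeg {n : ℕ} (G : Finset (Sym2 (Fin n))) : ℝ :=
  (∑ v : Fin n, (dS G Finset.univ v : ℝ) ^ 2) - (n:ℝ) * (2 * (G.card : ℝ) / n) ^ 2

/-- Gaussian CDF with mean `m` and variance `v`. -/
def gaussCdf (m v z : ℝ) : ℝ := ((gaussianReal m v.toNNReal) (Set.Iic z)).toReal

/-- Gaussian measure of a set, mean `m`, variance `v`. -/
def gaussMeas (m v : ℝ) (A : Set ℝ) : ℝ := ((gaussianReal m v.toNNReal) A).toReal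

/-- Gaussian density with mean `m` and variance `v`. -/
def gaussPdf (m v x : ℝ) : ℝ := gaussianPDFReal m v.toNNReal x

/-- `P(Y ∈ ·)` for `Y ~ Bin(ν, p)`. -/
def binomPr (ν : ℕ) (p : ℝ) (P : ℕ → Prop) : ℝ := by
  classical exact ∑ j ∈ Finset.range (ν + 1),
    if (P j) then (ν.choose j : ℝ) * p ^ j * (1 - p) ^ (ν - j) else 0

/-- Sample space for "uniform `k`-set `S`, then uniform `x ∈ S` and `x̄ ∈ S̄`". -/
def SwapΩ (n k : ℕ) : Finset (Σ _ : Finset (Fin n), Fin n × Fin n) :=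
  (kSets n k).sigma (fun S => S ×ˢ Sᶜ)

/-- A triple `(a, r, t)` is valid for `β`. -/
def ValidTriple (β : ℝ) (n a r t : ℕ) : Prop :=
  a ≤ r ∧
  (∃ c : ℝ, 1/2 ≤ c ∧ c ≤ 1 ∧ (a : ℝ) = c * (t:ℝ) ^ ((3:ℝ)/2) * (n:ℝ) ^ (2*β - 1/2)) ∧
  (r : ℝ) ≤ (n:ℝ) ^ (-β) * Real.sqrt ((n:ℝ) * (t:ℝ))

/-! ### Uniform averages -/

section UniformAverage

variable {ω : Type*} {Ω : Finset ω}

lemma Exu_mono {f g : ω → ℝ} (h : ∀ S ∈ Ω, f S ≤ g S) : Exu Ω f ≤ Exu Ω g :=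
  div_le_div_of_nonneg_right (sum_le_sum h) (Nat.cast_nonneg _)

lemma Exu_sub (f g : ω → ℝ) : Exu Ω (fun S => f S - g S) = Exu Ω f - Exu Ω g := by
  simp [Exu, sum_sub_distrib, sub_div]

lemma Exu_const_mul (c : ℝ) (f : ω → ℝ) : Exu Ω (fun S => c * f S) = c * Exu Ω f := by
  simp only [Exu, ← mul_sum, mul_div_assoc]

lemma Exu_sum {ι : Type*} (s : Finset ι) (f : ι → ω → ℝ) :
    Exu Ω (fun S => ∑ i ∈ s, f i S) = ∑ i ∈ s, Exu Ω (f i) := by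
  simp only [Exu, ← sum_div]
  rw [sum_comm]

lemma Exu_nonneg {f : ω → ℝ} (h : ∀ S ∈ Ω, 0 ≤ f S) : 0 ≤ Exu Ω f :=
  div_nonneg (sum_nonneg h) (Nat.cast_nonneg _)

lemma sq_Exu_mul_le (f g : ω → ℝ) :
    Exu Ω (fun S => f S * g S) ^ 2 ≤ (Exu Ω fun S => f S ^ 2) * Exu Ω fun S => g S ^ 2 := by
  simp only [Exu, div_pow, div_mul_div_comm, ← sq (#Ω : ℝ)]
  exact div_le_div_of_nonneg_right (sum_mul_sq_le_sq_mul_sq _ _ _) (sq_nonneg _)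

lemma Exu_const (hΩ : Ω.Nonempty) (c : ℝ) : Exu Ω (fun _ => c) = c := by
  have : (#Ω : ℝ) ≠ 0 := by exact_mod_cast hΩ.card_pos.ne'
  simp [Exu, mul_div_cancel_left₀ c this]

lemma abs_Exu_le (hΩ : Ω.Nonempty) {f : ω → ℝ} {C : ℝ} (h : ∀ S ∈ Ω, |f S| ≤ C) :
    |Exu Ω f| ≤ C :=
  abs_le.2 ⟨(Exu_const hΩ (-C)).symm.trans_le (Exu_mono fun S hS => (abs_le.1 (h S hS)).1),
    (Exu_mono fun S hS => (abs_le.1 (h S hS)).2).trans_eq (Exu_const hΩ C)⟩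

lemma Pru_eq_Exu (P : ω → Prop) [DecidablePred P] :
    Pru Ω P = Exu Ω (fun S => if P S then 1 else 0) := by
  simp only [Pru, Exu, sum_boole]
  congr!

lemma Pru_mono {P Q : ω → Prop} (h : ∀ S ∈ Ω, P S → Q S) : Pru Ω P ≤ Pru Ω Q := by
  classical
  unfold Pru
  gcongr with S hS
  exact h S hS

lemma one_sub_Pru_not (hΩ : Ω.Nonempty) (P : ω → Prop) :
    1 - Pru Ω (fun S => ¬ P S) = Pru Ω P := by
  classical
  rw [Pru_eq_Exu, Pru_eq_Exu]
  nth_rewrite 1 [← Exu_const hΩ 1]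
  rw [← Exu_sub]
  congr! 2 with S
  by_cases h : P S <;> simp [h]

end UniformAverage

/-! ### Binomial random subsets -/

section Binomial

variable {α : Type*} {E : Finset α} {p : ℝ}

/-- The expectation of `f` over the binomial random subset of `E`, which contains every element of
`E` independently with probability `p`. -/
def binomialExpect (p : ℝ) (E : Finset α) (f : Finset α → ℝ) : ℝ :=
  ∑ G ∈ E.powerset, p ^ #G * (1 - p) ^ (#E - #G) * f G

open Classical in
/-- The probability of `P` for the binomial random subset of `E`. -/
def binomialProb (p : ℝ) (E : Finset α) (P : Finset α → Prop) : ℝ :=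
  binomialExpect p E fun G => if P G then 1 else 0

lemma binomialExpect_congr {f g : Finset α → ℝ} (h : ∀ G ⊆ E, f G = g G) :
    binomialExpect p E f = binomialExpect p E g :=
  sum_congr rfl fun G hG => by rw [h G (mem_powerset.1 hG)]

lemma binomialWeight_nonneg (hp : p ∈ Set.Icc (0 : ℝ) 1) (i j : ℕ) :
    0 ≤ p ^ i * (1 - p) ^ j :=
  mul_nonneg (pow_nonneg hp.1 _) (pow_nonneg (sub_nonneg.2 hp.2) _)

lemma binomialExpect_mono (hp : p ∈ Set.Icc (0 : ℝ) 1) {f g : Finset α → ℝ}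
    (h : ∀ G ⊆ E, f G ≤ g G) : binomialExpect p E f ≤ binomialExpect p E g :=
  sum_le_sum fun G hG =>
    mul_le_mul_of_nonneg_left (h G (mem_powerset.1 hG)) (binomialWeight_nonneg hp _ _)

lemma binomialExpect_add (f g : Finset α → ℝ) :
    binomialExpect p E (fun G => f G + g G) = binomialExpect p E f + binomialExpect p E g := by
  simp [binomialExpect, mul_add, sum_add_distrib]

lemma binomialExpect_sub (f g : Finset α → ℝ) :
    binomialExpect p E (fun G => f G - g G) = binomialExpect p E f - binomialExpect p E g := by
  simp [binomialExpect, mul_sub, sum_sub_distrib]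

lemma binomialExpect_const_mul (c : ℝ) (f : Finset α → ℝ) :
    binomialExpect p E (fun G => c * f G) = c * binomialExpect p E f := by
  simp only [binomialExpect, mul_sum, mul_left_comm]

lemma binomialExpect_sum {ι : Type*} (s : Finset ι) (f : ι → Finset α → ℝ) :
    binomialExpect p E (fun G => ∑ i ∈ s, f i G) = ∑ i ∈ s, binomialExpect p E (f i) := by
  simp only [binomialExpect, mul_sum]
  exact sum_comm

lemma binomialExpect_Exu {ω : Type*} (Ω : Finset ω) (f : ω → Finset α → ℝ) :
    binomialExpect p E (fun G => Exu Ω fun S => f S G) =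
      Exu Ω fun S => binomialExpect p E (f S) := by
  simp only [Exu, div_eq_inv_mul, binomialExpect_const_mul, binomialExpect_sum]

lemma binomialExpect_empty (f : Finset α → ℝ) : binomialExpect p ∅ f = f ∅ := by
  simp [binomialExpect]

lemma binomialExpect_insert [DecidableEq α] {e : α} (he : e ∉ E) (f : Finset α → ℝ) :
    binomialExpect p (insert e E) f =
      (1 - p) * binomialExpect p E f + p * binomialExpect p E (fun G => f (insert e G)) := by
  simp only [binomialExpect, sum_powerset_insert he, mul_sum]
  congr 1 <;> refine sum_congr rfl fun G hG => ?_
  · rw [card_insert_of_notMem he, Nat.succ_sub (card_le_card (mem_powerset.1 hG)), pow_succ]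
    ring
  · rw [card_insert_of_notMem he, card_insert_of_notMem fun h => he (mem_powerset.1 hG h),
      Nat.add_sub_add_right, pow_succ]
    ring

lemma binomialExpect_const (c : ℝ) : binomialExpect p E (fun _ => c) = c := by
  classical
  induction E using Finset.induction_on with
  | empty => exact binomialExpect_empty _
  | insert e E he ih => rw [binomialExpect_insert he, ih]; ring

lemma binomialExpect_nonneg (hp : p ∈ Set.Icc (0 : ℝ) 1) {f : Finset α → ℝ}
    (h : ∀ G ⊆ E, 0 ≤ f G) : 0 ≤ binomialExpect p E f :=
  (binomialExpect_const 0).symm.trans_le (binomialExpect_mono hp h)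

lemma sq_binomialExpect_le (hp : p ∈ Set.Icc (0 : ℝ) 1) (f : Finset α → ℝ) :
    binomialExpect p E f ^ 2 ≤ binomialExpect p E (fun G => f G ^ 2) := by
  set m := binomialExpect p E f with hm
  have h : 0 ≤ binomialExpect p E fun G => f G ^ 2 + (-2 * m * f G + m ^ 2) :=
    binomialExpect_nonneg hp fun G _ => by nlinarith only [sq_nonneg (f G - m)]
  rw [binomialExpect_add, binomialExpect_add, binomialExpect_const_mul, binomialExpect_const,
    ← hm] at h
  linarith only [h]

lemma binomialExpect_exp_le_of_abs_le_one (hp : p ∈ Set.Icc (0 : ℝ) 1) {F : Finset α → ℝ} {b : ℝ}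
    (hb : b ≤ 1) (hFb : ∀ G ⊆ E, |F G| ≤ b) (hF₀ : binomialExpect p E F = 0) :
    binomialExpect p E (fun G => Real.exp (F G)) ≤ Real.exp (b ^ 2) := by
  have hpointwise : ∀ G ⊆ E, Real.exp (F G) ≤ F G + (b ^ 2 + 1) := fun G hG => by
    have htaylor := (abs_le.1 (Real.abs_exp_sub_one_sub_id_le ((hFb G hG).trans hb))).2
    have hsq : F G ^ 2 ≤ b ^ 2 := sq_le_sq' (abs_le.1 (hFb G hG)).1 (abs_le.1 (hFb G hG)).2
    linarith
  refine (binomialExpect_mono hp hpointwise).trans ?_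
  rw [binomialExpect_add, hF₀, binomialExpect_const, zero_add]
  exact Real.add_one_le_exp _

lemma binomialProb_le_binomialExpect (hp : p ∈ Set.Icc (0 : ℝ) 1) {P : Finset α → Prop}
    {f : Finset α → ℝ} (hf : ∀ G ⊆ E, 0 ≤ f G) (hPf : ∀ G ⊆ E, P G → 1 ≤ f G) :
    binomialProb p E P ≤ binomialExpect p E f :=
  binomialExpect_mono hp fun G hG => by split_ifs with h; exacts [hPf G hG h, hf G hG]

lemma binomialProb_mono (hp : p ∈ Set.Icc (0 : ℝ) 1) {P Q : Finset α → Prop}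
    (h : ∀ G ⊆ E, P G → Q G) : binomialProb p E P ≤ binomialProb p E Q := by
  classical
  exact binomialProb_le_binomialExpect hp (fun G _ => by split_ifs <;> norm_num)
    fun G hG hP => by rw [if_pos (h G hG hP)]

lemma binomialProb_exists_le_sum (hp : p ∈ Set.Icc (0 : ℝ) 1) {ι : Type*} (s : Finset ι)
    (P : ι → Finset α → Prop) :
    binomialProb p E (fun G => ∃ i ∈ s, P i G) ≤ ∑ i ∈ s, binomialProb p E (P i) := by
  classical
  have h₀ : ∀ G i, (0 : ℝ) ≤ if P i G then 1 else 0 := fun G i => by split_ifs <;> norm_num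
  refine (binomialProb_le_binomialExpect hp (fun G _ => sum_nonneg fun i _ => h₀ G i) ?_).trans_eq
    (binomialExpect_sum s _)
  rintro G - ⟨i, hi, hP⟩
  exact (if_pos hP).symm.le.trans
    (single_le_sum (f := fun i => if P i G then (1 : ℝ) else 0) (fun i _ => h₀ G i) hi)

end Binomial

/-! ### Concentration for binomial random subsets -/

section Concentration

variable {α : Type*} [DecidableEq α] {E : Finset α} {p : ℝ}

/-- The squared discrete gradient of `F` at `G`: the sum over `e ∈ E` of the squared effects on `F`
of switching `e` in the set `G`. -/
def sqGradient (E : Finset α) (F : Finset α → ℝ) (G : Finset α) : ℝ :=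
  ∑ e ∈ E, (F (insert e G) - F (G.erase e)) ^ 2

lemma sqGradient_nonneg (F : Finset α → ℝ) (G : Finset α) : 0 ≤ sqGradient E F G :=
  sum_nonneg fun _ _ => sq_nonneg _

lemma sqGradient_const_mul (c : ℝ) (F : Finset α → ℝ) (G : Finset α) :
    sqGradient E (fun G => c * F G) G = c ^ 2 * sqGradient E F G := by
  simp only [sqGradient, ← mul_sub, mul_pow, mul_sum]

lemma sqGradient_sub_const (F : Finset α → ℝ) (c : ℝ) :
    sqGradient E (fun G => F G - c) = sqGradient E F := by
  funext G
  simp only [sqGradient, sub_sub_sub_cancel_right]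

lemma sqGradient_insert_left {e : α} (F : Finset α → ℝ) {G : Finset α} (he : e ∉ E) (heG : e ∉ G) :
    sqGradient (insert e E) F G = (F (insert e G) - F G) ^ 2 + sqGradient E F G := by
  rw [sqGradient, sum_insert he, erase_eq_of_notMem heG, sqGradient]

lemma sqGradient_insert_insert {e : α} (F : Finset α → ℝ) {G : Finset α} (he : e ∉ E)
    (heG : e ∉ G) :
    sqGradient (insert e E) F (insert e G) =
      (F (insert e G) - F G) ^ 2 + sqGradient E (fun G => F (insert e G)) G := by
  rw [sqGradient, sum_insert he, erase_insert heG, insert_idem, sqGradient]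
  congr 1
  refine sum_congr rfl fun x hx => ?_
  rw [Finset.insert_comm, erase_insert_of_ne (ne_of_mem_of_not_mem hx he).symm]

theorem efron_stein (hp : p ∈ Set.Icc (0 : ℝ) 1) (F : Finset α → ℝ) :
    binomialExpect p E (fun G => F G ^ 2) - binomialExpect p E F ^ 2 ≤
      p * (1 - p) * binomialExpect p E (sqGradient E F) := by
  induction E using Finset.induction_on generalizing F with
  | empty => simp [binomialExpect_empty, sqGradient]
  | insert e E he ih =>
    have hG : ∀ G ⊆ E, e ∉ G := fun G hG h => he (hG h)
    have hq : 0 ≤ 1 - p := sub_nonneg.2 hp.2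
    rw [binomialExpect_insert he, binomialExpect_insert he, binomialExpect_insert he,
      binomialExpect_congr fun G h => sqGradient_insert_left F he (hG G h),
      binomialExpect_congr fun G h => sqGradient_insert_insert F he (hG G h),
      binomialExpect_add, binomialExpect_add]
    have hcross := mul_le_mul_of_nonneg_left
      (sq_binomialExpect_le (E := E) hp fun G => F (insert e G) - F G) (mul_nonneg hp.1 hq)
    rw [binomialExpect_sub] at hcross
    have hwithout := mul_le_mul_of_nonneg_left (ih F) hq
    have hwith := mul_le_mul_of_nonneg_left (ih fun G => F (insert e G)) hp.1
    linarith only [hcross, hwithout, hwith]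

lemma sqGradient_exp_le {F : Finset α → ℝ} {G : Finset α} (h : sqGradient E F G ≤ 1) :
    sqGradient E (fun G => Real.exp (F G)) G ≤ 4 * Real.exp (2 * F G) * sqGradient E F G := by
  have abs_exp_sub : ∀ x y : ℝ, |x - y| ≤ 1 → |Real.exp x - Real.exp y| ≤
      2 * |x - y| * Real.exp y := fun x y hxy => by
    rw [show Real.exp x - Real.exp y = (Real.exp (x - y) - 1) * Real.exp y by
      rw [sub_mul, ← Real.exp_add, sub_add_cancel, one_mul], abs_mul, Real.abs_exp]
    gcongr
    exact Real.abs_exp_sub_one_le hxy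
  rw [sqGradient, sqGradient, mul_sum]
  refine sum_le_sum fun e he => ?_
  have hdiff : |F (insert e G) - F (G.erase e)| ≤ 1 := (sq_le_one_iff_abs_le_one _).1 <|
    (single_le_sum (f := fun e => (F (insert e G) - F (G.erase e)) ^ 2)
      (fun _ _ => sq_nonneg _) he).trans h
  have hexp : |Real.exp (F (insert e G)) - Real.exp (F (G.erase e))| ≤
      2 * |F (insert e G) - F (G.erase e)| * Real.exp (F G) := by
    by_cases heG : e ∈ G
    · have := abs_exp_sub _ _ ((abs_sub_comm _ _).trans_le hdiff)
      rw [abs_sub_comm, abs_sub_comm (F (G.erase e)), insert_eq_of_mem heG] at this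
      rwa [insert_eq_of_mem heG]
    · have := abs_exp_sub _ _ hdiff
      rwa [erase_eq_of_notMem heG] at this ⊢
  calc (Real.exp (F (insert e G)) - Real.exp (F (G.erase e))) ^ 2
      ≤ (2 * |F (insert e G) - F (G.erase e)| * Real.exp (F G)) ^ 2 :=
        sq_le_sq' (abs_le.1 hexp).1 (abs_le.1 hexp).2
    _ = _ := by rw [mul_pow, mul_pow, sq_abs, ← Real.exp_nat_mul]; push_cast; ring

lemma binomialExpect_exp_two_mul_le (hp : p ∈ Set.Icc (0 : ℝ) 1) {F : Finset α → ℝ} {s : ℝ}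
    (hs : s ≤ 1 / 2) (hF : ∀ G ⊆ E, sqGradient E F G ≤ s) :
    binomialExpect p E (fun G => Real.exp (2 * F G)) ≤
      Real.exp (2 * s) * binomialExpect p E (fun G => Real.exp (F G)) ^ 2 := by
  set H := binomialExpect p E fun G => Real.exp (2 * F G) with hH
  set B := binomialExpect p E fun G => Real.exp (F G)
  have hs₀ : 0 ≤ s := (sqGradient_nonneg F ∅).trans (hF ∅ (empty_subset E))
  have hH₀ : 0 ≤ H := binomialExpect_nonneg hp fun G _ => (Real.exp_pos _).le
  have hgradient : binomialExpect p E (sqGradient E fun G => Real.exp (F G)) ≤ 4 * s * H := by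
    rw [hH, ← binomialExpect_const_mul]
    refine binomialExpect_mono hp fun G hG => ?_
    have := mul_le_mul_of_nonneg_left (hF G hG) (Real.exp_pos (2 * F G)).le
    linarith only [this, sqGradient_exp_le (E := E) (F := F) (G := G) (by linarith [hF G hG])]
  have hvar : H - B ^ 2 ≤ s * H := by
    have hstein := efron_stein (E := E) hp fun G => Real.exp (F G)
    have hsq : (fun G => Real.exp (F G) ^ 2) = fun G => Real.exp (2 * F G) := by
      funext G; rw [← Real.exp_nat_mul]; push_cast; rfl
    have hpq : p * (1 - p) ≤ 1 / 4 := by nlinarith only [sq_nonneg (p - 1 / 2)]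
    rw [hsq] at hstein
    refine hstein.trans ((mul_le_mul_of_nonneg_left hgradient
      (mul_nonneg hp.1 (sub_nonneg.2 hp.2))).trans ?_)
    linarith only [mul_le_mul_of_nonneg_right hpq (by positivity : 0 ≤ 4 * s * H)]
  have hexp : 1 ≤ (1 - s) * Real.exp (2 * s) := by
    nlinarith only [Real.add_one_le_exp (2 * s), hs, hs₀]
  calc H = 1 * H := (one_mul H).symm
    _ ≤ (1 - s) * Real.exp (2 * s) * H := by gcongr
    _ = Real.exp (2 * s) * (H - s * H) := by ring
    _ ≤ Real.exp (2 * s) * B ^ 2 := by gcongr; linarith only [hvar]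

/-- Halving `F` repeatedly makes it small enough for a second-order expansion, at the cost of a
geometric series of factors from `binomialExpect_exp_two_mul_le`. -/
lemma binomialExpect_exp_le_of_abs_le_pow (hp : p ∈ Set.Icc (0 : ℝ) 1) (j : ℕ) :
    ∀ {F : Finset α → ℝ} {s b : ℝ}, s ≤ 2 → (∀ G ⊆ E, sqGradient E F G ≤ s) → b ≤ 2 ^ j →
    (∀ G ⊆ E, |F G| ≤ b) → binomialExpect p E F = 0 →
    binomialExpect p E (fun G => Real.exp (F G)) ≤ Real.exp (s + b ^ 2 / 2 ^ j) := by
  induction j with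
  | zero =>
    intro F s b _ hF hb hFb hF₀
    have hs₀ : 0 ≤ s := (sqGradient_nonneg F ∅).trans (hF ∅ (empty_subset E))
    refine (binomialExpect_exp_le_of_abs_le_one hp (by simpa using hb) hFb hF₀).trans ?_
    rw [Real.exp_le_exp]
    simpa using hs₀
  | succ j ih =>
    intro F s b hs hF hb hFb hF₀
    have hF' : ∀ G ⊆ E, sqGradient E (fun G => 1 / 2 * F G) G ≤ s / 4 := fun G hG => by
      rw [sqGradient_const_mul]; linarith [hF G hG]
    have hhalf := ih (F := fun G => 1 / 2 * F G) (b := b / 2) (by linarith) hF'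
      (by rw [pow_succ] at hb; linarith)
      (fun G hG => by rw [abs_mul, abs_of_pos one_half_pos]; linarith [hFb G hG])
      (by rw [binomialExpect_const_mul, hF₀, mul_zero])
    have hdouble := binomialExpect_exp_two_mul_le hp (by linarith) hF'
    simp only [← mul_assoc, mul_one_div_cancel (two_ne_zero (α := ℝ)), one_mul] at hdouble
    have hpos : 0 ≤ binomialExpect p E fun G => Real.exp (1 / 2 * F G) :=
      binomialExpect_nonneg hp fun G _ => (Real.exp_pos _).le
    calc _ ≤ Real.exp (2 * (s / 4)) * Real.exp (s / 4 + (b / 2) ^ 2 / 2 ^ j) ^ 2 := by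
          refine hdouble.trans ?_
          gcongr
      _ = Real.exp (s + b ^ 2 / 2 ^ (j + 1)) := by
          rw [← Real.exp_nat_mul, ← Real.exp_add]
          congr 1
          push_cast
          ring

theorem binomialExpect_exp_sub_le (hp : p ∈ Set.Icc (0 : ℝ) 1) {F : Finset α → ℝ} {s : ℝ}
    (hs : s ≤ 2) (hF : ∀ G ⊆ E, sqGradient E F G ≤ s) :
    binomialExpect p E (fun G => Real.exp (F G - binomialExpect p E F)) ≤ Real.exp s := by
  set F₀ : Finset α → ℝ := fun G => F G - binomialExpect p E F
  obtain ⟨b, hb⟩ : ∃ b, ∀ G ⊆ E, |F₀ G| ≤ b :=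
    ⟨∑ G ∈ E.powerset, |F₀ G|, fun G hG => single_le_sum (f := fun G => |F₀ G|)
      (fun _ _ => abs_nonneg _) (mem_powerset.2 hG)⟩
  have hpow := tendsto_pow_atTop_atTop_of_one_lt (one_lt_two (α := ℝ))
  have hlim : Filter.Tendsto (fun j : ℕ => Real.exp (s + b ^ 2 / 2 ^ j)) Filter.atTop
      (nhds (Real.exp s)) := by
    have := (hpow.const_div_atTop (b ^ 2)).const_add s
    rw [add_zero] at this
    exact (Real.continuous_exp.tendsto _).comp this
  refine ge_of_tendsto hlim ?_
  filter_upwards [hpow.eventually_ge_atTop b] with j hj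
  exact binomialExpect_exp_le_of_abs_le_pow hp j hs
    (fun G hG => by rw [sqGradient_sub_const]; exact hF G hG) hj hb
    (by rw [binomialExpect_sub, binomialExpect_const, sub_self])

theorem binomialProb_lt_abs_sub_le (hp : p ∈ Set.Icc (0 : ℝ) 1) {F : Finset α → ℝ} {σ : ℝ}
    (hσ : 0 < σ) (hF : ∀ G ⊆ E, sqGradient E F G ≤ σ ^ 2) (t : ℝ) :
    binomialProb p E (fun G => t < |F G - binomialExpect p E F|) ≤ 2 * Real.exp (1 - t / σ) := by
  set m := binomialExpect p E F
  have hlaplace : ∀ θ : ℝ, θ ^ 2 = (σ ^ 2)⁻¹ →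
      binomialExpect p E (fun G => Real.exp (θ * (F G - m))) ≤ Real.exp 1 := fun θ hθ => by
    have h := binomialExpect_exp_sub_le (F := fun G => θ * F G) (s := 1) hp one_le_two
      fun G hG => by
        rw [sqGradient_const_mul, hθ, inv_mul_le_one₀ (by positivity)]
        exact hF G hG
    simpa only [binomialExpect_const_mul, ← mul_sub] using h
  calc binomialProb p E (fun G => t < |F G - m|)
      ≤ binomialExpect p E (fun G => Real.exp (-(t / σ)) *
          (Real.exp (σ⁻¹ * (F G - m)) + Real.exp (-σ⁻¹ * (F G - m)))) := by
        refine binomialProb_le_binomialExpect hp (fun G _ => by positivity) fun G _ hG => ?_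
        rw [neg_mul]
        calc (1 : ℝ) ≤ Real.exp (-(t / σ) + |σ⁻¹ * (F G - m)|) := by
              rw [Real.one_le_exp_iff, abs_mul, abs_of_pos (inv_pos.2 hσ), neg_add_eq_sub,
                sub_nonneg, div_eq_inv_mul]
              gcongr
          _ ≤ _ := by rw [Real.exp_add]; gcongr; exact Real.exp_abs_le _
    _ ≤ Real.exp (-(t / σ)) * (Real.exp 1 + Real.exp 1) := by
        rw [binomialExpect_const_mul, binomialExpect_add]
        gcongr <;> exact hlaplace _ (by simp)
    _ = 2 * Real.exp (1 - t / σ) := by rw [sub_eq_neg_add, Real.exp_add]; ring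

end Concentration

/-! ### Conditioning on the size of a binomial random subset -/

section Mode

variable {p : ℝ} {N M : ℕ}

/-- The mass that the binomial distribution with parameters `N` and `p` gives to `j`. -/
def binomialMass (N : ℕ) (p : ℝ) (j : ℕ) : ℝ := N.choose j * p ^ j * (1 - p) ^ (N - j)

lemma binomialMass_nonneg (hp : p ∈ Set.Icc (0 : ℝ) 1) (N j : ℕ) : 0 ≤ binomialMass N p j := by
  rw [binomialMass, mul_assoc]
  exact mul_nonneg (Nat.cast_nonneg _) (binomialWeight_nonneg hp _ _)

lemma sum_binomialMass (N : ℕ) (p : ℝ) : ∑ j ∈ range (N + 1), binomialMass N p j = 1 := by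
  have h := add_pow p (1 - p) N
  rw [add_sub_cancel, one_pow] at h
  rw [h]
  exact sum_congr rfl fun j _ => by rw [binomialMass]; ring

lemma binomialMass_succ_mul {j : ℕ} (hj : j < N) :
    binomialMass N p (j + 1) * ((j + 1) * (1 - p)) = binomialMass N p j * ((N - j) * p) := by
  have hchoose : (N.choose (j + 1) * (j + 1) : ℝ) = N.choose j * (N - j) := by
    rw [← Nat.cast_sub hj.le]
    exact_mod_cast Nat.choose_succ_right_eq N j
  rw [binomialMass, binomialMass, show N - j = N - (j + 1) + 1 by omega, pow_succ, pow_succ]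
  linear_combination p ^ j * p * (1 - p) ^ (N - (j + 1)) * (1 - p) * hchoose

lemma binomialMass_le_of_mul_eq (hp : p ∈ Set.Icc (0 : ℝ) 1) (hM : N * p = M) {j : ℕ}
    (hj : j ≤ N) : binomialMass N p j ≤ binomialMass N p M := by
  have hMN : M ≤ N := by
    exact_mod_cast hM.symm.trans_le (mul_le_of_le_one_right (Nat.cast_nonneg N) hp.2)
  rcases le_total j M with hjM | hMj
  · refine Nat.decreasingInduction' (P := fun i => binomialMass N p i ≤ binomialMass N p M)
      (fun i hiM _ ih => le_trans ?_ ih) hjM le_rfl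
    have hiN : (i : ℝ) < N := by exact_mod_cast hiM.trans_le hMN
    have hi : (i + 1 : ℝ) ≤ M := by exact_mod_cast hiM
    have hp₀ : 0 < p := pos_of_mul_pos_right (by linarith : 0 < N * p) (Nat.cast_nonneg N)
    refine le_of_mul_le_mul_right ?_ (mul_pos (sub_pos.2 hiN) hp₀)
    rw [← binomialMass_succ_mul (hiM.trans_le hMN)]
    exact mul_le_mul_of_nonneg_left (by linarith) (binomialMass_nonneg hp _ _)
  · induction j, hMj using Nat.le_induction with
    | base => exact le_rfl
    | succ i hMi ih =>
      refine le_trans ?_ (ih (by omega))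
      have hi : (M : ℝ) ≤ i := by exact_mod_cast hMi
      have hiN : (i + 1 : ℝ) ≤ N := by exact_mod_cast hj
      have hp₁ : p < 1 := by
        by_contra h
        rw [le_antisymm hp.2 (not_lt.1 h), mul_one] at hM
        linarith
      refine le_of_mul_le_mul_right ?_ (mul_pos (by positivity : (0 : ℝ) < i + 1) (sub_pos.2 hp₁))
      rw [binomialMass_succ_mul (by omega)]
      exact mul_le_mul_of_nonneg_left (by linarith [hp.2]) (binomialMass_nonneg hp _ _)

lemma one_le_succ_mul_binomialMass (hp : p ∈ Set.Icc (0 : ℝ) 1) (hM : N * p = M) :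
    1 ≤ (N + 1) * binomialMass N p M := by
  calc (1 : ℝ) = ∑ j ∈ range (N + 1), binomialMass N p j := (sum_binomialMass N p).symm
    _ ≤ #(range (N + 1)) • binomialMass N p M := sum_le_card_nsmul _ _ _ fun j hj =>
        binomialMass_le_of_mul_eq hp hM (Nat.lt_succ_iff.1 (mem_range.1 hj))
    _ = (N + 1) * binomialMass N p M := by rw [card_range, nsmul_eq_mul]; push_cast; rfl

lemma Pru_powersetCard_mul_binomialMass_le {α : Type*} (hp : p ∈ Set.Icc (0 : ℝ) 1) (E : Finset α)
    (M : ℕ) (P : Finset α → Prop) :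
    Pru (E.powersetCard M) P * binomialMass #E p M ≤ binomialProb p E P := by
  classical
  have hcard : Pru (E.powersetCard M) P * (#E).choose M ≤ #{G ∈ E.powersetCard M | P G} := by
    rw [Pru, ← card_powersetCard, div_mul_eq_mul_div, mul_div_assoc]
    exact mul_le_of_le_one_right (Nat.cast_nonneg _) (div_self_le_one _)
  have hweight := binomialWeight_nonneg hp M (#E - M)
  calc Pru (E.powersetCard M) P * binomialMass #E p M
      = Pru (E.powersetCard M) P * (#E).choose M * (p ^ M * (1 - p) ^ (#E - M)) := by
        rw [binomialMass]; ring
    _ ≤ #{G ∈ E.powersetCard M | P G} * (p ^ M * (1 - p) ^ (#E - M)) := by gcongr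
    _ = ∑ G ∈ E.powersetCard M with P G,
          p ^ #G * (1 - p) ^ (#E - #G) * (if P G then 1 else 0) := by
        rw [← nsmul_eq_mul, ← sum_const]
        refine sum_congr rfl fun G hG => ?_
        rw [mem_filter, mem_powersetCard] at hG
        rw [if_pos hG.2, hG.1.2, mul_one]
    _ ≤ binomialProb p E P := by
        refine sum_le_sum_of_subset_of_nonneg
          (fun G hG => mem_powerset.2 (mem_powersetCard.1 (mem_filter.1 hG).1).1) fun G _ _ =>
          mul_nonneg (binomialWeight_nonneg hp _ _) (by split_ifs <;> norm_num)

theorem Pru_powersetCard_le {α : Type*} {E : Finset α} (hp : p ∈ Set.Icc (0 : ℝ) 1)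
    (hM : #E * p = M) (P : Finset α → Prop) :
    Pru (E.powersetCard M) P ≤ (#E + 1) * binomialProb p E P := by
  have hP : 0 ≤ Pru (E.powersetCard M) P := by unfold Pru; positivity
  calc Pru (E.powersetCard M) P
      ≤ Pru (E.powersetCard M) P * ((#E + 1) * binomialMass #E p M) :=
        le_mul_of_one_le_right hP (one_le_succ_mul_binomialMass hp hM)
    _ = (#E + 1) * (Pru (E.powersetCard M) P * binomialMass #E p M) := by ring
    _ ≤ (#E + 1) * binomialProb p E P := by
        gcongr
        exact Pru_powersetCard_mul_binomialMass_le hp E M P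

end Mode

/-! ### Smooth test functions and Gaussian averages -/

section TaylorBounded

/-- Smooth test functions: `f` is bounded and continuous, and `f'`, `f''` play the role of its first
two derivatives. Smoothness enters only through Taylor bounds, in which `A₁` bounds the first
derivative, `A₂` the second one and the remainder after the linear term, and `A₃` the remainder
after the quadratic term; in this form the class is visibly stable under averaging. -/
structure TaylorBounded (f f' f'' : ℝ → ℝ) (A₁ A₂ A₃ : ℝ) : Prop where
  continuous : Continuous f
  continuous_fst : Continuous f'
  continuous_snd : Continuous f''
  bounded : ∃ C, ∀ x, |f x| ≤ C
  abs_fst_le : ∀ x, |f' x| ≤ A₁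
  abs_snd_le : ∀ x, |f'' x| ≤ A₂
  taylor_one : ∀ x y, |f (x + y) - f x - f' x * y| ≤ A₂ * y ^ 2
  taylor_two : ∀ x y, |f (x + y) - f x - f' x * y - f'' x * y ^ 2 / 2| ≤ A₃ * |y| ^ 3

lemma integrable_of_continuous_of_abs_le {μ : Measure ℝ} [IsFiniteMeasure μ] {f : ℝ → ℝ}
    (hf : Continuous f) {C : ℝ} (hC : ∀ x, |f x| ≤ C) : Integrable f μ :=
  Integrable.of_bound hf.aestronglyMeasurable C (.of_forall hC)

lemma continuous_integral_translate {μ : Measure ℝ} [IsFiniteMeasure μ] {f : ℝ → ℝ}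
    (hf : Continuous f) {C : ℝ} (hC : ∀ x, |f x| ≤ C) : Continuous fun x => ∫ z, f (x + z) ∂μ :=
  continuous_of_dominated (bound := fun _ => C)
    (fun x => (hf.comp (by fun_prop : Continuous fun z => x + z)).aestronglyMeasurable)
    (fun _ => .of_forall fun _ => hC _) (integrable_const _)
    (.of_forall fun _ => hf.comp (by fun_prop))

lemma abs_integral_le_of_abs_le {μ : Measure ℝ} [IsProbabilityMeasure μ] {f : ℝ → ℝ} {C : ℝ}
    (hC : ∀ x, |f x| ≤ C) : |∫ z, f z ∂μ| ≤ C := by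
  simpa using norm_integral_le_of_norm_le_const (μ := μ) (f := f) (C := C) (.of_forall hC)

namespace TaylorBounded

variable {f f' f'' : ℝ → ℝ} {A₁ A₂ A₃ : ℝ} (hf : TaylorBounded f f' f'' A₁ A₂ A₃)

include hf

lemma nonneg_three : 0 ≤ A₃ := by
  simpa using (abs_nonneg _).trans (hf.taylor_two 0 1)

lemma integrable_translate (μ : Measure ℝ) [IsFiniteMeasure μ] (x : ℝ) :
    Integrable (fun y => f (x + y)) μ :=
  let ⟨_, hC⟩ := hf.bounded
  integrable_of_continuous_of_abs_le (hf.continuous.comp (by fun_prop)) fun _ => hC _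

lemma rescale (z : ℝ) {L : ℝ} (hL : 0 < L) :
    TaylorBounded (fun x => f ((x - z) / L)) (fun x => f' ((x - z) / L) / L)
      (fun x => f'' ((x - z) / L) / L ^ 2) (A₁ / L) (A₂ / L ^ 2) (A₃ / L ^ 3) where
  continuous := hf.continuous.comp (by fun_prop)
  continuous_fst := (hf.continuous_fst.comp (by fun_prop)).div_const _
  continuous_snd := (hf.continuous_snd.comp (by fun_prop)).div_const _
  bounded := hf.bounded.imp fun _ hC _ => hC _
  abs_fst_le x := by
    rw [abs_div, abs_of_pos hL]
    exact div_le_div_of_nonneg_right (hf.abs_fst_le _) hL.le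
  abs_snd_le x := by
    rw [abs_div, abs_of_pos (pow_pos hL 2)]
    exact div_le_div_of_nonneg_right (hf.abs_snd_le _) (pow_pos hL 2).le
  taylor_one x y := by
    rw [show (x + y - z) / L = (x - z) / L + y / L by ring]
    exact le_of_eq_of_le (congrArg _ (by ring))
      ((hf.taylor_one ((x - z) / L) (y / L)).trans_eq (by ring))
  taylor_two x y := by
    rw [show (x + y - z) / L = (x - z) / L + y / L by ring]
    refine le_of_eq_of_le (congrArg _ (by ring))
      ((hf.taylor_two ((x - z) / L) (y / L)).trans_eq ?_)
    rw [abs_div, abs_of_pos hL]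
    ring

lemma integral_translate (μ : Measure ℝ) [IsProbabilityMeasure μ] :
    TaylorBounded (fun x => ∫ z, f (x + z) ∂μ) (fun x => ∫ z, f' (x + z) ∂μ)
      (fun x => ∫ z, f'' (x + z) ∂μ) A₁ A₂ A₃ := by
  obtain ⟨C, hC⟩ := hf.bounded
  have hint := hf.integrable_translate μ
  have hint' : ∀ x, Integrable (fun z => f' (x + z)) μ := fun x =>
    integrable_of_continuous_of_abs_le (hf.continuous_fst.comp (by fun_prop))
      fun z => hf.abs_fst_le _
  have hint'' : ∀ x, Integrable (fun z => f'' (x + z)) μ := fun x =>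
    integrable_of_continuous_of_abs_le (hf.continuous_snd.comp (by fun_prop))
      fun z => hf.abs_snd_le _
  have hlinear : ∀ x y, ∫ z, f (x + y + z) ∂μ - ∫ z, f (x + z) ∂μ - (∫ z, f' (x + z) ∂μ) * y =
      ∫ z, (f (x + z + y) - f (x + z) - f' (x + z) * y) ∂μ := fun x y => by
    simp only [add_right_comm x _ y]
    rw [integral_sub, integral_sub, integral_mul_const]
    · simpa only [add_right_comm x y] using hint (x + y)
    · exact hint x
    · exact .sub (by simpa only [add_right_comm x y] using hint (x + y)) (hint x)
    · exact (hint' x).mul_const y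
  refine ⟨continuous_integral_translate hf.continuous hC,
    continuous_integral_translate hf.continuous_fst hf.abs_fst_le,
    continuous_integral_translate hf.continuous_snd hf.abs_snd_le,
    ⟨C, fun x => abs_integral_le_of_abs_le fun z => hC _⟩,
    fun x => abs_integral_le_of_abs_le fun z => hf.abs_fst_le _,
    fun x => abs_integral_le_of_abs_le fun z => hf.abs_snd_le _, fun x y => ?_, fun x y => ?_⟩
  · rw [hlinear]
    exact abs_integral_le_of_abs_le fun z => hf.taylor_one _ _
  · rw [hlinear, ← integral_mul_const, ← integral_div, ← integral_sub]
    · exact abs_integral_le_of_abs_le fun z => hf.taylor_two _ _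
    · refine .sub (.sub ?_ (hint x)) ((hint' x).mul_const y)
      simpa only [add_right_comm x y] using hint (x + y)
    · exact ((hint'' x).mul_const _).div_const 2

lemma abs_integral_sub_le {μ : Measure ℝ} [IsProbabilityMeasure μ] (hμ : MemLp id 2 μ)
    (hmean : ∫ y, y ∂μ = 0) (x : ℝ) :
    |∫ y, f (x + y) ∂μ - f x| ≤ A₂ * ∫ y, y ^ 2 ∂μ := by
  have hid : Integrable (fun y : ℝ => y) μ := hμ.integrable one_le_two
  have hsq : Integrable (fun y : ℝ => y ^ 2) μ := hμ.integrable_sq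
  have hconst : Integrable (fun y => f (x + y) - f x) μ :=
    (hf.integrable_translate μ x).sub (integrable_const _)
  have hlinear : ∫ y, (f (x + y) - f x - f' x * y) ∂μ = ∫ y, f (x + y) ∂μ - f x := by
    rw [integral_sub hconst (hid.const_mul _),
      integral_sub (hf.integrable_translate μ x) (integrable_const _), integral_const_mul, hmean,
      integral_const, probReal_univ, one_smul, mul_zero, sub_zero]
  rw [← hlinear, ← integral_const_mul]
  exact norm_integral_le_of_norm_le (hsq.const_mul _) (.of_forall fun y =>
    (Real.norm_eq_abs _).trans_le (hf.taylor_one x y))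

lemma abs_integral_sub_snd_le {μ : Measure ℝ} [IsProbabilityMeasure μ] (hμ : MemLp id 3 μ)
    (hmean : ∫ y, y ∂μ = 0) (x : ℝ) :
    |∫ y, f (x + y) ∂μ - f x - f'' x * (∫ y, y ^ 2 ∂μ) / 2| ≤ A₃ * ∫ y, |y| ^ 3 ∂μ := by
  have hμ₂ : MemLp id 2 μ := hμ.mono_exponent (by norm_num)
  have hid : Integrable (fun y : ℝ => y) μ := hμ₂.integrable one_le_two
  have hsq : Integrable (fun y : ℝ => y ^ 2) μ := hμ₂.integrable_sq
  have hcube : Integrable (fun y : ℝ => |y| ^ 3) μ := hμ.integrable_norm_pow'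
  have hconst : Integrable (fun y => f (x + y) - f x) μ :=
    (hf.integrable_translate μ x).sub (integrable_const _)
  have hlinear : Integrable (fun y => f (x + y) - f x - f' x * y) μ := hconst.sub (hid.const_mul _)
  have hquadratic : ∫ y, (f (x + y) - f x - f' x * y - f'' x * y ^ 2 / 2) ∂μ =
      ∫ y, f (x + y) ∂μ - f x - f'' x * (∫ y, y ^ 2 ∂μ) / 2 := by
    rw [integral_sub hlinear ((hsq.const_mul _).div_const _),
      integral_sub hconst (hid.const_mul _),
      integral_sub (hf.integrable_translate μ x) (integrable_const _), integral_const_mul, hmean,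
      integral_div, integral_const_mul, integral_const, probReal_univ, one_smul, mul_zero, sub_zero]
  rw [← hquadratic, ← integral_const_mul]
  exact norm_integral_le_of_norm_le (hcube.const_mul _) (.of_forall fun y =>
    (Real.norm_eq_abs _).trans_le (hf.taylor_two x y))

end TaylorBounded

lemma abs_le_mul_pow_succ_of_hasDerivAt {f f' : ℝ → ℝ} {C : ℝ} (hC : 0 ≤ C) (m : ℕ)
    (hf : ∀ y, HasDerivAt f (f' y) y) (hf' : ∀ y, |f' y| ≤ C * |y| ^ m) (hf₀ : f 0 = 0) (y : ℝ) :
    |f y| ≤ C * |y| ^ (m + 1) := by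
  have h := (convex_closedBall (0 : ℝ) |y|).norm_image_sub_le_of_norm_hasDerivWithin_le
    (f := f) (C := C * |y| ^ m) (fun x _ => (hf x).hasDerivWithinAt)
    (fun x hx => (hf' x).trans <| by
      have : |x| ≤ |y| := by simpa using hx
      gcongr)
    (x := 0) (y := y) (by simp) (by simp)
  rw [hf₀, sub_zero, sub_zero] at h
  rw [pow_succ, ← mul_assoc]
  exact h

lemma TaylorBounded.of_contDiff {f : ℝ → ℝ} {A₁ A₂ A₃ : ℝ} (hf : ContDiff ℝ 3 f)
    (h₀ : ∃ C, ∀ x, |f x| ≤ C) (h₁ : ∀ x, |deriv f x| ≤ A₁) (h₂ : ∀ x, |deriv (deriv f) x| ≤ A₂)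
    (h₃ : ∀ x, |deriv (deriv (deriv f)) x| ≤ A₃) :
    TaylorBounded f (deriv f) (deriv (deriv f)) A₁ A₂ A₃ := by
  have hf' : ContDiff ℝ 2 (deriv f) := hf.deriv'
  have hf'' : ContDiff ℝ 1 (deriv (deriv f)) := hf'.deriv'
  have hA₂ : 0 ≤ A₂ := (abs_nonneg _).trans (h₂ 0)
  have hA₃ : 0 ≤ A₃ := (abs_nonneg _).trans (h₃ 0)
  have hasDerivAt : ∀ {g : ℝ → ℝ}, Differentiable ℝ g → ∀ x y,
      HasDerivAt (fun y => g (x + y)) (deriv g (x + y)) y := fun hg x y =>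
    hg.differentiableAt.hasDerivAt.comp_const_add x y
  have d := hasDerivAt (hf.differentiable (by norm_num))
  have d' := hasDerivAt (hf'.differentiable (by norm_num))
  have d'' := hasDerivAt (hf''.differentiable (by norm_num))
  have fst_sub : ∀ x y, |deriv f (x + y) - deriv f x| ≤ A₂ * |y| ^ 1 := fun x =>
    abs_le_mul_pow_succ_of_hasDerivAt hA₂ 0 (fun y => (d' x y).sub_const _)
      (fun y => by simpa using h₂ (x + y)) (by simp)
  have snd_sub : ∀ x y, |deriv (deriv f) (x + y) - deriv (deriv f) x| ≤ A₃ * |y| ^ 1 := fun x =>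
    abs_le_mul_pow_succ_of_hasDerivAt hA₃ 0 (fun y => (d'' x y).sub_const _)
      (fun y => by simpa using h₃ (x + y)) (by simp)
  have fst_taylor : ∀ x y, |deriv f (x + y) - deriv f x - deriv (deriv f) x * y| ≤ A₃ * |y| ^ 2 :=
    fun x => abs_le_mul_pow_succ_of_hasDerivAt hA₃ 1
      (fun y => ((d' x y).sub_const _).sub
        (by simpa using (hasDerivAt_id y).const_mul (deriv (deriv f) x)))
      (snd_sub x) (by simp)
  refine ⟨hf.continuous, hf'.continuous, hf''.continuous, h₀, h₁, h₂, fun x y => ?_, fun x y => ?_⟩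
  · rw [← sq_abs y]
    exact abs_le_mul_pow_succ_of_hasDerivAt hA₂ 1
      (f := fun y => f (x + y) - f x - deriv f x * y)
      (fun y => ((d x y).sub_const _).sub (by simpa using (hasDerivAt_id y).const_mul (deriv f x)))
      (fst_sub x) (by simp) y
  · refine abs_le_mul_pow_succ_of_hasDerivAt hA₃ 2
      (f := fun y => f (x + y) - f x - deriv f x * y - deriv (deriv f) x * y ^ 2 / 2)
      (fun y => ?_) (fst_taylor x) (by simp) y
    have := (((d x y).sub_const (f x)).sub ((hasDerivAt_id y).const_mul (deriv f x))).sub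
      (((hasDerivAt_pow 2 y).const_mul (deriv (deriv f) x)).div_const 2)
    exact this.congr_deriv (by push_cast; ring)

/-- A smooth decreasing step, from `1` on `(-∞, 0]` to `0` on `[1, ∞)`. -/
def smoothStep (x : ℝ) : ℝ := 1 - Real.smoothTransition x

lemma smoothStep_mem_Icc (x : ℝ) : smoothStep x ∈ Set.Icc (0 : ℝ) 1 :=
  ⟨sub_nonneg.2 (Real.smoothTransition.le_one x), sub_le_self _ (Real.smoothTransition.nonneg x)⟩

lemma smoothStep_of_nonpos {x : ℝ} (hx : x ≤ 0) : smoothStep x = 1 := by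
  rw [smoothStep, Real.smoothTransition.zero_of_nonpos hx, sub_zero]

lemma smoothStep_of_one_le {x : ℝ} (hx : 1 ≤ x) : smoothStep x = 0 := by
  rw [smoothStep, Real.smoothTransition.one_of_one_le hx, sub_self]

lemma contDiff_smoothStep {n : ℕ∞} : ContDiff ℝ n smoothStep :=
  contDiff_const.sub Real.smoothTransition.contDiff

lemma hasCompactSupport_deriv_smoothStep : HasCompactSupport (deriv smoothStep) := by
  refine HasCompactSupport.intro (isCompact_Icc (a := (0 : ℝ)) (b := 1)) fun x hx => ?_
  rw [Set.mem_Icc, not_and_or, not_le, not_le] at hx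
  have hconst : ∃ c : ℝ, smoothStep =ᶠ[nhds x] fun _ => c := by
    rcases hx with hx | hx
    · exact ⟨1, by filter_upwards [Iio_mem_nhds hx] with y hy using smoothStep_of_nonpos hy.le⟩
    · exact ⟨0, by filter_upwards [Ioi_mem_nhds hx] with y hy using smoothStep_of_one_le hy.le⟩
  obtain ⟨c, hc⟩ := hconst
  rw [hc.deriv_eq, deriv_const]

lemma exists_taylorBounded_smoothStep : ∃ A > 0,
    TaylorBounded smoothStep (deriv smoothStep) (deriv (deriv smoothStep)) A A A := by
  have hsmooth : ContDiff ℝ 3 smoothStep := contDiff_smoothStep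
  have hsmooth' : ContDiff ℝ 2 (deriv smoothStep) := hsmooth.deriv'
  have hsmooth'' : ContDiff ℝ 1 (deriv (deriv smoothStep)) := hsmooth'.deriv'
  have hsupp := hasCompactSupport_deriv_smoothStep
  obtain ⟨C₁, hC₁⟩ := hsmooth'.continuous.bounded_above_of_compact_support hsupp
  obtain ⟨C₂, hC₂⟩ := hsmooth''.continuous.bounded_above_of_compact_support hsupp.deriv
  obtain ⟨C₃, hC₃⟩ := (hsmooth''.continuous_deriv le_rfl).bounded_above_of_compact_support
    hsupp.deriv.deriv
  refine ⟨max 1 (max C₁ (max C₂ C₃)), by positivity, .of_contDiff hsmooth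
    ⟨1, fun x => abs_le.2 ⟨by linarith [(smoothStep_mem_Icc x).1], (smoothStep_mem_Icc x).2⟩⟩
    (fun x => (hC₁ x).trans ?_) (fun x => (hC₂ x).trans ?_) (fun x => (hC₃ x).trans ?_)⟩ <;> simp

end TaylorBounded

section Gaussian

/-- The third absolute moment of the standard normal distribution. -/
def gaussianThirdMoment : ℝ := ∫ y, |y| ^ 3 ∂(gaussianReal 0 1)

lemma gaussianThirdMoment_nonneg : 0 ≤ gaussianThirdMoment :=
  integral_nonneg fun _ => by positivity

lemma integral_sq_gaussianReal (v : NNReal) : ∫ y, y ^ 2 ∂(gaussianReal 0 v) = v := by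
  have h := variance_fun_id_gaussianReal (μ := 0) (v := v)
  rwa [variance_of_integral_eq_zero (by fun_prop) (by simp)] at h

lemma integral_abs_cube_gaussianReal (v : NNReal) :
    ∫ y, |y| ^ 3 ∂(gaussianReal 0 v) = √v ^ 3 * gaussianThirdMoment := by
  have hscale : gaussianReal 0 v = (gaussianReal 0 1).map (fun x => √v * x) := by
    rw [gaussianReal_map_const_mul, mul_zero]
    congr 1
    ext
    simp
  rw [hscale, integral_map (by fun_prop) (by fun_prop), gaussianThirdMoment, ← integral_const_mul]
  simp only [abs_mul, abs_of_nonneg (Real.sqrt_nonneg _), mul_pow]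

lemma gaussianReal_real_Icc_le (μ : ℝ) {v : NNReal} (hv : v ≠ 0) {a b : ℝ} (hab : a ≤ b) :
    (gaussianReal μ v).real (Set.Icc a b) ≤ (b - a) * (√(2 * Real.pi * v))⁻¹ := by
  have hpdf : ∀ x, gaussianPDFReal μ v x ≤ (√(2 * Real.pi * v))⁻¹ := fun x =>
    mul_le_of_le_one_right (by positivity) (Real.exp_le_one_iff.2
      (div_nonpos_of_nonpos_of_nonneg (neg_nonpos.2 (sq_nonneg _)) (by positivity)))
  refine ENNReal.toReal_le_of_le_ofReal (mul_nonneg (sub_nonneg.2 hab) (by positivity)) ?_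
  calc gaussianReal μ v (Set.Icc a b)
      = ∫⁻ x in Set.Icc a b, gaussianPDF μ v x := gaussianReal_apply μ hv _
    _ ≤ ∫⁻ _ in Set.Icc a b, ENNReal.ofReal (√(2 * Real.pi * v))⁻¹ :=
        lintegral_mono fun x => ENNReal.ofReal_le_ofReal (hpdf x)
    _ = ENNReal.ofReal ((b - a) * (√(2 * Real.pi * v))⁻¹) := by
        rw [lintegral_const, Measure.restrict_apply_univ, Real.volume_Icc, mul_comm,
          ENNReal.ofReal_mul (sub_nonneg.2 hab)]

lemma integral_translate_gaussianReal {f : ℝ → ℝ} (hf : Continuous f) (μ : ℝ) (v : NNReal) :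
    ∫ y, f (μ + y) ∂(gaussianReal 0 v) = ∫ w, f w ∂(gaussianReal μ v) := by
  have h := gaussianReal_map_const_add (μ := 0) (v := v) μ
  rw [zero_add] at h
  rw [← h, integral_map (by fun_prop) hf.aestronglyMeasurable]

namespace TaylorBounded

variable {f f' f'' : ℝ → ℝ} {A₁ A₂ A₃ : ℝ} (hf : TaylorBounded f f' f'' A₁ A₂ A₃)

include hf

lemma integral_gaussianReal_add (v w : NNReal) (x : ℝ) :
    ∫ z, f (x + z) ∂(gaussianReal 0 (v + w)) =
      ∫ y, ∫ z, f (x + y + z) ∂(gaussianReal 0 v) ∂(gaussianReal 0 w) := by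
  have hconv : gaussianReal 0 (v + w) = gaussianReal 0 w ∗ gaussianReal 0 v := by
    rw [gaussianReal_conv_gaussianReal, add_comm, add_zero]
  rw [hconv, integral_conv (hf.integrable_translate _ x)]
  simp only [add_assoc]

/-- For `v ≤ w`, the distribution `N(0, w)` is the convolution of `N(0, v)` and `N(0, w - v)`. -/
lemma abs_integral_gaussianReal_sub_le (v w : NNReal) (x : ℝ) :
    |∫ z, f (x + z) ∂(gaussianReal 0 v) - ∫ z, f (x + z) ∂(gaussianReal 0 w)| ≤
      A₂ * |(v : ℝ) - w| := by
  wlog hvw : v ≤ w generalizing v w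
  · rw [abs_sub_comm, abs_sub_comm (v : ℝ)]
    exact this w v (le_of_not_ge hvw)
  have h := (hf.integral_translate (gaussianReal 0 v)).abs_integral_sub_le
    (memLp_id_gaussianReal (μ := 0) (v := w - v) 2) integral_id_gaussianReal x
  rw [← hf.integral_gaussianReal_add v (w - v), add_tsub_cancel_of_le hvw,
    integral_sq_gaussianReal, NNReal.coe_sub hvw] at h
  rwa [abs_sub_comm, abs_sub_comm (v : ℝ), abs_of_nonneg (sub_nonneg.2 (NNReal.coe_le_coe.2 hvw))]

end TaylorBounded

end Gaussian

/-! ### Lindeberg replacement -/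

section Lindeberg

variable {α : Type*} [DecidableEq α] {E : Finset α} {p : ℝ}

/-- The linear statistic `∑ c e (1[e ∈ G] - p)`, which has mean zero when `G` is the binomial random
subset of `E` with parameter `p`. -/
def centredSum (E : Finset α) (c : α → ℝ) (p : ℝ) (G : Finset α) : ℝ :=
  ∑ e ∈ E, c e * ((if e ∈ G then 1 else 0) - p)

lemma centredSum_insert_left {e : α} {G : Finset α} (he : e ∉ E) (heG : e ∉ G) (c : α → ℝ) :
    centredSum (insert e E) c p G = -(c e * p) + centredSum E c p G := by
  rw [centredSum, sum_insert he, if_neg heG, zero_sub, mul_neg, centredSum]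

lemma centredSum_insert_insert {e : α} {G : Finset α} (he : e ∉ E) (c : α → ℝ) :
    centredSum (insert e E) c p (insert e G) = c e * (1 - p) + centredSum E c p G := by
  rw [centredSum, sum_insert he, if_pos (mem_insert_self e G), centredSum]
  refine congrArg _ (sum_congr rfl fun f hf => ?_)
  simp only [mem_insert, ne_of_mem_of_not_mem hf he, false_or]

lemma centredSum_insert {e : α} {G : Finset α} (he : e ∈ E) (heG : e ∉ G) (c : α → ℝ) :
    centredSum E c p (insert e G) = centredSum E c p G + c e := by
  have h := notMem_erase e E
  rw [← insert_erase he, centredSum_insert_insert h, centredSum_insert_left h heG]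
  ring

lemma abs_add_le_of_mem_Icc (hp : p ∈ Set.Icc (0 : ℝ) 1) {a b r : ℝ} (ha : |a| ≤ r)
    (hb : |b| ≤ r) : |(1 - p) * a + p * b| ≤ r := by
  rw [abs_le] at *
  exact convex_Icc (-r) r ha hb (sub_nonneg.2 hp.2) hp.1 (sub_add_cancel 1 p)

namespace TaylorBounded

variable {f f' f'' : ℝ → ℝ} {A₁ A₂ A₃ : ℝ} (hf : TaylorBounded f f' f'' A₁ A₂ A₃)

include hf

/-- The centred two-point variable and the Gaussian have the same first two moments, so only the
remainders of the second-order Taylor expansions survive. -/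
lemma abs_bernoulli_sub_integral_gaussianReal_le (hp : p ∈ Set.Icc (0 : ℝ) 1) (c x : ℝ) :
    |(1 - p) * f (x + -(c * p)) + p * f (x + c * (1 - p)) -
      ∫ y, f (x + y) ∂(gaussianReal 0 (p * (1 - p) * c ^ 2).toNNReal)| ≤
      A₃ * (1 + gaussianThirdMoment) * |c| ^ 3 := by
  have hp₀ := hp.1
  have hq₀ : 0 ≤ 1 - p := sub_nonneg.2 hp.2
  set v := (p * (1 - p) * c ^ 2).toNNReal
  have hv : (v : ℝ) = p * (1 - p) * c ^ 2 := Real.coe_toNNReal _ (by positivity)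
  have hσ : √(v : ℝ) ≤ |c| := by
    rw [hv, ← Real.sqrt_sq_eq_abs]
    exact Real.sqrt_le_sqrt (mul_le_of_le_one_left (sq_nonneg c) (by nlinarith))
  have hgauss := hf.abs_integral_sub_snd_le (memLp_id_gaussianReal (μ := 0) (v := v) 3)
    integral_id_gaussianReal x
  rw [integral_sq_gaussianReal, integral_abs_cube_gaussianReal] at hgauss
  replace hgauss := hgauss.trans (b := A₃ * (√v ^ 3 * gaussianThirdMoment))
    (c := A₃ * (|c| ^ 3 * gaussianThirdMoment)) (by
      have := hf.nonneg_three
      have := gaussianThirdMoment_nonneg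
      gcongr)
  have htaylor : ∀ {t : ℝ}, 0 ≤ t → t ≤ 1 → A₃ * |c * t| ^ 3 ≤ A₃ * |c| ^ 3 := fun ht₀ ht₁ => by
    have := hf.nonneg_three
    rw [abs_mul, abs_of_nonneg ht₀]
    gcongr
    exact mul_le_of_le_one_right (abs_nonneg c) ht₁
  have hout := (hf.taylor_two x (-(c * p))).trans ((abs_neg (c * p)).symm ▸ htaylor hp₀ hp.2)
  have hin := (hf.taylor_two x (c * (1 - p))).trans (htaylor hq₀ (by linarith))
  have hremainders : (1 - p) * f (x + -(c * p)) + p * f (x + c * (1 - p)) -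
      ∫ y, f (x + y) ∂(gaussianReal 0 v) =
      ((1 - p) * (f (x + -(c * p)) - f x - f' x * -(c * p) - f'' x * (-(c * p)) ^ 2 / 2) +
        p * (f (x + c * (1 - p)) - f x - f' x * (c * (1 - p)) - f'' x * (c * (1 - p)) ^ 2 / 2)) -
      (∫ y, f (x + y) ∂(gaussianReal 0 v) - f x - f'' x * v / 2) := by
    rw [hv]
    ring
  rw [hremainders]
  exact (abs_sub _ _).trans
    ((add_le_add (abs_add_le_of_mem_Icc hp hout hin) hgauss).trans_eq (by ring))

theorem abs_binomialExpect_sub_integral_gaussianReal_le (hp : p ∈ Set.Icc (0 : ℝ) 1) (c : α → ℝ)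
    (x : ℝ) :
    |binomialExpect p E (fun G => f (x + centredSum E c p G)) -
      ∫ y, f (x + y) ∂(gaussianReal 0 (p * (1 - p) * ∑ e ∈ E, c e ^ 2).toNNReal)| ≤
      A₃ * (1 + gaussianThirdMoment) * ∑ e ∈ E, |c e| ^ 3 := by
  have hp₀ := hp.1
  have hq₀ : 0 ≤ 1 - p := sub_nonneg.2 hp.2
  induction E using Finset.induction_on generalizing x with
  | empty => simp [binomialExpect_empty, centredSum]
  | insert e E he ih =>
    set v := (p * (1 - p) * ∑ e ∈ E, c e ^ 2).toNNReal with hv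
    have hvar : (p * (1 - p) * ∑ e ∈ insert e E, c e ^ 2).toNNReal =
        v + (p * (1 - p) * c e ^ 2).toNNReal := by
      rw [hv, ← Real.toNNReal_add (by positivity) (by positivity), sum_insert he]
      congr 1
      ring
    set B : ℝ → ℝ := fun x => binomialExpect p E fun G => f (x + centredSum E c p G)
    set I : ℝ → ℝ := fun x => ∫ z, f (x + z) ∂(gaussianReal 0 v)
    have hout : binomialExpect p E (fun G => f (x + centredSum (insert e E) c p G)) =
        B (x + -(c e * p)) :=
      binomialExpect_congr fun G hG => by
        rw [centredSum_insert_left he (notMem_mono hG he), add_assoc]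
    have hin : binomialExpect p E (fun G => f (x + centredSum (insert e E) c p (insert e G))) =
        B (x + c e * (1 - p)) :=
      binomialExpect_congr fun G _ => by rw [centredSum_insert_insert he, add_assoc]
    have hreplace := (hf.integral_translate
      (gaussianReal 0 v)).abs_bernoulli_sub_integral_gaussianReal_le hp (c e) x
    rw [binomialExpect_insert he, hout, hin, hvar, hf.integral_gaussianReal_add, sum_insert he]
    set J : ℝ := ∫ y, I (x + y) ∂(gaussianReal 0 (p * (1 - p) * c e ^ 2).toNNReal)
    have hsplit : (1 - p) * B (x + -(c e * p)) + p * B (x + c e * (1 - p)) - J =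
        ((1 - p) * (B (x + -(c e * p)) - I (x + -(c e * p))) +
          p * (B (x + c e * (1 - p)) - I (x + c e * (1 - p)))) +
        ((1 - p) * I (x + -(c e * p)) + p * I (x + c e * (1 - p)) - J) := by
      ring
    rw [hsplit]
    exact (abs_add_le _ _).trans
      ((add_le_add (abs_add_le_of_mem_Icc hp (ih _) (ih _)) hreplace).trans_eq (by ring))

end TaylorBounded

end Lindeberg

/-! ### A Bessel inequality -/

section Bessel

variable {ι ω : Type*}

lemma sum_sum_mul_le_of_sum_abs_le {E : Finset ι} {R : ι → ι → ℝ} (hsymm : ∀ e f, R e f = R f e)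
    {D : ℝ} (hrow : ∀ e ∈ E, ∑ f ∈ E, |R e f| ≤ D) (y : ι → ℝ) :
    ∑ e ∈ E, ∑ f ∈ E, y e * y f * R e f ≤ D * ∑ e ∈ E, y e ^ 2 := by
  have hentry : ∀ e f, y e * y f * R e f ≤ y e ^ 2 / 2 * |R e f| + y f ^ 2 / 2 * |R e f| :=
    fun e f => calc
      y e * y f * R e f ≤ |y e| * |y f| * |R e f| := by
        rw [← abs_mul, ← abs_mul]
        exact le_abs_self _
      _ ≤ (y e ^ 2 / 2 + y f ^ 2 / 2) * |R e f| := by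
        refine mul_le_mul_of_nonneg_right ?_ (abs_nonneg _)
        linarith [two_mul_le_add_sq |y e| |y f|, sq_abs (y e), sq_abs (y f)]
      _ = _ := add_mul _ _ _
  have hswap : ∑ e ∈ E, ∑ f ∈ E, y f ^ 2 / 2 * |R e f| =
      ∑ e ∈ E, ∑ f ∈ E, y e ^ 2 / 2 * |R e f| := by
    rw [sum_comm]
    simp only [hsymm]
  calc ∑ e ∈ E, ∑ f ∈ E, y e * y f * R e f
      ≤ ∑ e ∈ E, ∑ f ∈ E, (y e ^ 2 / 2 * |R e f| + y f ^ 2 / 2 * |R e f|) :=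
        sum_le_sum fun e _ => sum_le_sum fun f _ => hentry e f
    _ = ∑ e ∈ E, y e ^ 2 * ∑ f ∈ E, |R e f| := by
        simp only [sum_add_distrib]
        rw [hswap, ← two_mul, mul_sum]
        refine sum_congr rfl fun e _ => ?_
        rw [← mul_sum]
        ring
    _ ≤ ∑ e ∈ E, y e ^ 2 * D :=
        sum_le_sum fun e he => mul_le_mul_of_nonneg_left (hrow e he) (sq_nonneg _)
    _ = D * ∑ e ∈ E, y e ^ 2 := by rw [← sum_mul, mul_comm]

lemma sum_sq_Exu_mul_le {Ω : Finset ω} {E : Finset ι} {c : ω → ι → ℝ} {D : ℝ} (hD : 0 ≤ D)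
    (hrow : ∀ e ∈ E, ∑ f ∈ E, |Exu Ω fun S => c S e * c S f| ≤ D) (g : ω → ℝ) :
    ∑ e ∈ E, (Exu Ω fun S => g S * c S e) ^ 2 ≤ D * Exu Ω fun S => g S ^ 2 := by
  set y : ι → ℝ := fun e => Exu Ω fun S => g S * c S e
  set Y := ∑ e ∈ E, y e ^ 2
  have hY_eq : Y = Exu Ω fun S => g S * ∑ e ∈ E, y e * c S e := by
    simp only [mul_sum, Exu_sum, mul_left_comm (g _), Exu_const_mul]
    exact sum_congr rfl fun e _ => sq (y e)
  have hquadratic : (Exu Ω fun S => (∑ e ∈ E, y e * c S e) ^ 2) ≤ D * Y := by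
    have hexpand : (Exu Ω fun S => (∑ e ∈ E, y e * c S e) ^ 2) =
        ∑ e ∈ E, ∑ f ∈ E, y e * y f * Exu Ω fun S => c S e * c S f := by
      simp only [sq, sum_mul_sum, Exu_sum, ← Exu_const_mul, mul_mul_mul_comm]
    rw [hexpand]
    exact sum_sum_mul_le_of_sum_abs_le (fun e f => by simp only [mul_comm]) hrow y
  have hG : 0 ≤ Exu Ω fun S => g S ^ 2 := Exu_nonneg fun S _ => sq_nonneg _
  have hY_sq : Y * Y ≤ (D * Exu Ω fun S => g S ^ 2) * Y := calc
    Y * Y = (Exu Ω fun S => g S * ∑ e ∈ E, y e * c S e) ^ 2 := by rw [← hY_eq, sq]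
    _ ≤ (Exu Ω fun S => g S ^ 2) * (D * Y) :=
        (sq_Exu_mul_le _ _).trans (mul_le_mul_of_nonneg_left hquadratic hG)
    _ = _ := by ring
  rcases (sum_nonneg fun e _ => sq_nonneg (y e) : 0 ≤ Y).eq_or_lt with hY₀ | hY₀
  · exact hY₀.symm.trans_le (mul_nonneg hD hG)
  · exact le_of_mul_le_mul_right hY_sq hY₀

end Bessel

/-! ### Averages of test functions at random linear statistics -/

section TestAverage

variable {α ω : Type*} [DecidableEq α]

/-- The average, over uniform `S ∈ Ω`, of the test function `f` at the linear statistic with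
coefficients `c S`. -/
def testAverage (Ω : Finset ω) (E : Finset α) (c : ω → α → ℝ) (p : ℝ) (f : ℝ → ℝ)
    (G : Finset α) : ℝ :=
  Exu Ω fun S => f (centredSum E (c S) p G)

namespace TaylorBounded

variable {Ω : Finset ω} {E : Finset α} {c : ω → α → ℝ} {p : ℝ} {f f' f'' : ℝ → ℝ} {A₁ A₂ A₃ : ℝ}
  (hf : TaylorBounded f f' f'' A₁ A₂ A₃) (hΩ : Ω.Nonempty) (hc : ∀ S ∈ Ω, ∀ e ∈ E, |c S e| ≤ 1)

include hf hΩ hc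

lemma abs_testAverage_insert_sub_erase_le {e : α} (he : e ∈ E) (G : Finset α) :
    |testAverage Ω E c p f (insert e G) - testAverage Ω E c p f (G.erase e) -
      Exu Ω fun S => f' (centredSum E (c S) p G) * c S e| ≤ A₂ := by
  rw [testAverage, testAverage, ← Exu_sub, ← Exu_sub]
  refine abs_Exu_le hΩ fun S hS => ?_
  have hA₂ : A₂ * c S e ^ 2 ≤ A₂ :=
    mul_le_of_le_one_right ((abs_nonneg _).trans (hf.abs_snd_le 0))
      ((sq_le_one_iff_abs_le_one _).2 (hc S hS e he))
  by_cases heG : e ∈ G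
  · have hG : centredSum E (c S) p G = centredSum E (c S) p (G.erase e) + c S e := by
      rw [← centredSum_insert he (notMem_erase e G), insert_erase heG]
    have h := hf.taylor_one (centredSum E (c S) p G) (-c S e)
    rw [neg_sq, ← sub_eq_add_neg, ← eq_sub_of_add_eq hG.symm] at h
    rw [insert_eq_of_mem heG, ← abs_neg]
    exact le_of_eq_of_le (congrArg abs (by ring)) (h.trans hA₂)
  · rw [erase_eq_of_notMem heG, centredSum_insert he heG]
    exact (hf.taylor_one _ _).trans hA₂

lemma sqGradient_testAverage_le {D : ℝ} (hD : 0 ≤ D)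
    (hrow : ∀ e ∈ E, ∑ f ∈ E, |Exu Ω fun S => c S e * c S f| ≤ D) (G : Finset α) :
    sqGradient E (testAverage Ω E c p f) G ≤ 2 * D * A₁ ^ 2 + 2 * #E * A₂ ^ 2 := by
  set g : ω → ℝ := fun S => f' (centredSum E (c S) p G)
  have hterm : ∀ e ∈ E,
      (testAverage Ω E c p f (insert e G) - testAverage Ω E c p f (G.erase e)) ^ 2 ≤
        2 * (Exu Ω fun S => g S * c S e) ^ 2 + 2 * A₂ ^ 2 := fun e he => by
    have h := hf.abs_testAverage_insert_sub_erase_le hΩ hc (p := p) he G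
    set d := testAverage Ω E c p f (insert e G) - testAverage Ω E c p f (G.erase e)
    set y := Exu Ω fun S => g S * c S e
    have hsq : (d - y) ^ 2 ≤ A₂ ^ 2 := sq_le_sq' (abs_le.1 h).1 (abs_le.1 h).2
    calc d ^ 2 = (y + (d - y)) ^ 2 := by ring
      _ ≤ 2 * (y ^ 2 + (d - y) ^ 2) := add_sq_le
      _ ≤ 2 * (y ^ 2 + A₂ ^ 2) := by linarith
      _ = 2 * y ^ 2 + 2 * A₂ ^ 2 := mul_add _ _ _
  have hg : (Exu Ω fun S => g S ^ 2) ≤ A₁ ^ 2 :=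
    (Exu_mono fun S _ => sq_le_sq' (abs_le.1 (hf.abs_fst_le _)).1
      (abs_le.1 (hf.abs_fst_le _)).2).trans_eq (Exu_const hΩ _)
  calc sqGradient E (testAverage Ω E c p f) G
      ≤ ∑ e ∈ E, (2 * (Exu Ω fun S => g S * c S e) ^ 2 + 2 * A₂ ^ 2) := sum_le_sum hterm
    _ = 2 * ∑ e ∈ E, (Exu Ω fun S => g S * c S e) ^ 2 + 2 * #E * A₂ ^ 2 := by
        rw [sum_add_distrib, ← mul_sum, sum_const, nsmul_eq_mul]
        ring
    _ ≤ 2 * (D * A₁ ^ 2) + 2 * #E * A₂ ^ 2 := by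
        gcongr
        exact (sum_sq_Exu_mul_le hD hrow g).trans (mul_le_mul_of_nonneg_left hg hD)
    _ = _ := by ring

lemma abs_binomialExpect_testAverage_sub_le (hp : p ∈ Set.Icc (0 : ℝ) 1) {s : ℝ}
    (hs : ∀ S ∈ Ω, ∑ e ∈ E, c S e ^ 2 = s) :
    |binomialExpect p E (testAverage Ω E c p f) -
      ∫ y, f y ∂(gaussianReal 0 (p * (1 - p) * s).toNNReal)| ≤
      A₃ * (1 + gaussianThirdMoment) * #E := by
  unfold testAverage
  rw [binomialExpect_Exu, ← Exu_const hΩ (∫ y, f y ∂_), ← Exu_sub]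
  refine abs_Exu_le hΩ fun S hS => ?_
  have hlindeberg := hf.abs_binomialExpect_sub_integral_gaussianReal_le (E := E) hp (c S) 0
  simp only [zero_add, hs S hS] at hlindeberg
  have hcube : ∑ e ∈ E, |c S e| ^ 3 ≤ #E :=
    (sum_le_card_nsmul _ _ 1 fun e he => pow_le_one₀ (abs_nonneg _) (hc S hS e he)).trans_eq
      (by rw [nsmul_one])
  exact hlindeberg.trans (mul_le_mul_of_nonneg_left hcube
    (mul_nonneg hf.nonneg_three (add_nonneg zero_le_one gaussianThirdMoment_nonneg)))

theorem binomialProb_lt_abs_testAverage_sub_le (hp : p ∈ Set.Icc (0 : ℝ) 1) {s : ℝ}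
    (hs : ∀ S ∈ Ω, ∑ e ∈ E, c S e ^ 2 = s) {D : ℝ} (hD : 0 ≤ D)
    (hrow : ∀ e ∈ E, ∑ f ∈ E, |Exu Ω fun S => c S e * c S f| ≤ D) {σ : ℝ} (hσ : 0 < σ)
    (hDσ : 2 * D * A₁ ^ 2 + 2 * #E * A₂ ^ 2 ≤ σ ^ 2) (t : ℝ) :
    binomialProb p E (fun G => t + A₃ * (1 + gaussianThirdMoment) * #E <
      |testAverage Ω E c p f G - ∫ y, f y ∂(gaussianReal 0 (p * (1 - p) * s).toNNReal)|) ≤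
      2 * Real.exp (1 - t / σ) := by
  refine (binomialProb_mono hp fun G _ h => ?_).trans (binomialProb_lt_abs_sub_le
    (F := testAverage Ω E c p f) hp hσ
    (fun G _ => (hf.sqGradient_testAverage_le hΩ hc hD hrow G).trans hDσ) t)
  have hmean := hf.abs_binomialExpect_testAverage_sub_le hΩ hc hp hs
  linarith [abs_sub_le (testAverage Ω E c p f G) (binomialExpect p E (testAverage Ω E c p f))
    (∫ y, f y ∂(gaussianReal 0 (p * (1 - p) * s).toNNReal))]

end TaylorBounded

end TestAverage

/-! ### Edge indicators of a uniform `k`-set -/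

lemma Nr_eq_choose (n : ℕ) : Nr n = n.choose 2 := (Nat.cast_choose_two ℝ n).symm

lemma Kr_eq_choose (k : ℕ) : Kr k = k.choose 2 := (Nat.cast_choose_two ℝ k).symm

lemma Nr_pos {n : ℕ} (hn : 2 ≤ n) : 0 < Nr n := by
  rw [Nr_eq_choose]
  exact_mod_cast Nat.choose_pos hn

lemma Kr_div_Nr_mem_Icc {n k : ℕ} (hk : k ≤ n) : Kr k / Nr n ∈ Set.Icc (0 : ℝ) 1 := by
  rw [Kr_eq_choose, Nr_eq_choose]
  exact ⟨by positivity,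
    div_le_one_of_le₀ (mod_cast Nat.choose_le_choose 2 hk) (Nat.cast_nonneg _)⟩

lemma mem_completeEdges {n : ℕ} {e : Sym2 (Fin n)} : e ∈ completeEdges n ↔ ¬ e.IsDiag := by
  simp [completeEdges]

lemma card_completeEdges (n : ℕ) : #(completeEdges n) = n.choose 2 := by
  classical
  have hcard := Sym2.card_subtype_not_diag (α := Fin n)
  rw [Fintype.card_fin, Fintype.card_subtype] at hcard
  rw [← hcard, completeEdges]

lemma card_completeEdges_eq_Nr (n : ℕ) : (#(completeEdges n) : ℝ) = Nr n := by
  rw [card_completeEdges, Nr_eq_choose]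

lemma graphsM_eq_powersetCard (n M : ℕ) : graphsM n M = (completeEdges n).powersetCard M := by
  ext G
  simp [graphsM, mem_powersetCard]

lemma kSets_nonempty {n k : ℕ} (hk : k ≤ n) : (kSets n k).Nonempty := by
  rw [kSets, powersetCard_nonempty]
  simpa using hk

lemma card_of_mem_kSets {n k : ℕ} {S : Finset (Fin n)} (hS : S ∈ kSets n k) : #S = k :=
  (mem_powersetCard.1 hS).2

lemma Exu_kSets_ite_subset_eq {n : ℕ} (k : ℕ) {T T' : Finset (Fin n)} (h : #T = #T') :
    (Exu (kSets n k) fun S => if T ⊆ S then (1 : ℝ) else 0) =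
      Exu (kSets n k) fun S => if T' ⊆ S then (1 : ℝ) else 0 := by
  have hcard : ∀ U : Finset (Fin n), #U ≤ k →
      #{S ∈ kSets n k | U ⊆ S} = (n - #U).choose (k - #U) := fun U hU => by
    rw [kSets, card_filter_powersetCard_subset U _ k (subset_univ U) hU, card_univ,
      Fintype.card_fin]
  have hempty : ∀ U : Finset (Fin n), ¬ #U ≤ k → #{S ∈ kSets n k | U ⊆ S} = 0 := fun U hU => by
    rw [card_eq_zero, filter_eq_empty_iff]
    exact fun S hS hUS => hU ((card_le_card hUS).trans_eq (card_of_mem_kSets hS))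
  simp only [Exu, sum_boole]
  by_cases hk : #T ≤ k
  · rw [hcard T hk, hcard T' (h ▸ hk), h]
  · rw [hempty T hk, hempty T' (h ▸ hk)]

/-- The indicator that both endpoints of `e` lie in `S`. -/
def edgeIndicator {n : ℕ} (S : Finset (Fin n)) (e : Sym2 (Fin n)) : ℝ :=
  if e.toFinset ⊆ S then 1 else 0

/-- `edgeIndicator S e` minus its mean `K / N` over the uniform `k`-sets `S`. These are the
coefficients with which the edges of the graph enter `e(S) - K M / N`. -/
def centredEdgeIndicator (n k : ℕ) (S : Finset (Fin n)) (e : Sym2 (Fin n)) : ℝ :=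
  edgeIndicator S e - Kr k / Nr n

lemma toFinset_subset_iff {n : ℕ} {S : Finset (Fin n)} {e : Sym2 (Fin n)} :
    e.toFinset ⊆ S ↔ ∀ v ∈ e, v ∈ S := by
  simp [subset_iff]

lemma filter_toFinset_subset_completeEdges {n : ℕ} (S : Finset (Fin n)) :
    {e ∈ completeEdges n | e.toFinset ⊆ S} = S.offDiag.image Sym2.mk.uncurry := by
  ext e
  induction e using Sym2.ind with
  | _ a b =>
    simp only [mem_filter, mem_completeEdges, toFinset_subset_iff, mem_image, mem_offDiag,
      Prod.exists, Sym2.mem_iff, Function.uncurry_apply_pair]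
    constructor
    · rintro ⟨hab, hS⟩
      exact ⟨a, b, ⟨hS a (.inl rfl), hS b (.inr rfl), by simpa using hab⟩, rfl⟩
    · rintro ⟨x, y, ⟨hx, hy, hxy⟩, hedge⟩
      rcases Sym2.eq_iff.1 hedge with ⟨rfl, rfl⟩ | ⟨rfl, rfl⟩ <;> aesop

lemma sum_edgeIndicator {n : ℕ} (S : Finset (Fin n)) :
    ∑ e ∈ completeEdges n, edgeIndicator S e = Kr #S := by
  simp only [edgeIndicator]
  rw [sum_boole, filter_toFinset_subset_completeEdges, Sym2.card_image_offDiag, Kr_eq_choose]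

lemma sum_edgeIndicator_eq_edgesIn {n : ℕ} (S : Finset (Fin n)) (G : Finset (Sym2 (Fin n))) :
    ∑ e ∈ G, edgeIndicator S e = edgesIn G S := by
  simp only [edgeIndicator, edgesIn, sum_boole, toFinset_subset_iff]

lemma edgeIndicator_sq {n : ℕ} (S : Finset (Fin n)) (e : Sym2 (Fin n)) :
    edgeIndicator S e ^ 2 = edgeIndicator S e := by
  rw [edgeIndicator]
  split_ifs <;> norm_num

lemma edgeIndicator_mul_edgeIndicator {n : ℕ} (S : Finset (Fin n)) (e f : Sym2 (Fin n)) :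
    edgeIndicator S e * edgeIndicator S f =
      if e.toFinset ∪ f.toFinset ⊆ S then (1 : ℝ) else 0 := by
  simp only [edgeIndicator, union_subset_iff, ite_and, mul_ite, mul_one, mul_zero]
  split_ifs <;> rfl

lemma edgesIn_le_card {n : ℕ} (G : Finset (Sym2 (Fin n))) (S : Finset (Fin n)) :
    edgesIn G S ≤ #G :=
  card_filter_le _ _

section CentredEdgeIndicator

variable {n k : ℕ}

lemma abs_centredEdgeIndicator_le (hk : k ≤ n) (S : Finset (Fin n)) (e : Sym2 (Fin n)) :
    |centredEdgeIndicator n k S e| ≤ 1 := by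
  obtain ⟨h₀, h₁⟩ := Kr_div_Nr_mem_Icc hk
  rw [centredEdgeIndicator, edgeIndicator, abs_le]
  split_ifs <;> constructor <;> linarith

lemma sum_centredEdgeIndicator (hn : 2 ≤ n) {S : Finset (Fin n)} (hS : S ∈ kSets n k) :
    ∑ e ∈ completeEdges n, centredEdgeIndicator n k S e = 0 := by
  simp only [centredEdgeIndicator]
  rw [sum_sub_distrib, sum_edgeIndicator, card_of_mem_kSets hS, sum_const, nsmul_eq_mul,
    card_completeEdges_eq_Nr, mul_div_cancel₀ _ (Nr_pos hn).ne', sub_self]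

lemma sum_sq_centredEdgeIndicator (hn : 2 ≤ n) {S : Finset (Fin n)} (hS : S ∈ kSets n k) :
    ∑ e ∈ completeEdges n, centredEdgeIndicator n k S e ^ 2 = Kr k * (Nr n - Kr k) / Nr n := by
  have hsq : ∀ e, centredEdgeIndicator n k S e ^ 2 = (1 - Kr k / Nr n) * edgeIndicator S e -
      Kr k / Nr n * centredEdgeIndicator n k S e := fun e => by
    simp only [centredEdgeIndicator]
    linear_combination edgeIndicator_sq S e
  simp only [hsq]
  rw [sum_sub_distrib, ← mul_sum, ← mul_sum, sum_centredEdgeIndicator hn hS, sum_edgeIndicator,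
    card_of_mem_kSets hS]
  have hN := (Nr_pos hn).ne'
  field_simp
  ring

lemma muP_add_centredSum {M : ℕ} (hn : 2 ≤ n) {S : Finset (Fin n)} (hS : S ∈ kSets n k)
    {G : Finset (Sym2 (Fin n))} (hG : G ∈ graphsM n M) (p : ℝ) :
    muP n M k + centredSum (completeEdges n) (centredEdgeIndicator n k S) p G = edgesIn G S := by
  rw [graphsM_eq_powersetCard, mem_powersetCard] at hG
  have hsum : centredSum (completeEdges n) (centredEdgeIndicator n k S) p G =
      ∑ e ∈ G, centredEdgeIndicator n k S e := by
    simp only [centredSum, mul_sub, sum_sub_distrib, ← sum_mul, sum_centredEdgeIndicator hn hS,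
      zero_mul, sub_zero, mul_ite, mul_one, mul_zero]
    rw [sum_ite_mem, inter_eq_right.2 hG.1]
  rw [hsum]
  simp only [centredEdgeIndicator, sum_sub_distrib, sum_edgeIndicator_eq_edgesIn, sum_const, hG.2,
    nsmul_eq_mul, muP]
  ring

lemma Exu_centredEdgeIndicator (hn : 2 ≤ n) {e : Sym2 (Fin n)} (he : e ∈ completeEdges n) :
    (Exu (kSets n k) fun S => centredEdgeIndicator n k S e) = 0 := by
  have hsum : ∑ f ∈ completeEdges n,
      Exu (kSets n k) (fun S => centredEdgeIndicator n k S f) = 0 := by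
    rw [← Exu_sum, Exu, sum_eq_zero fun S hS => sum_centredEdgeIndicator hn hS, zero_div]
  have hsymm : ∀ f ∈ completeEdges n, Exu (kSets n k) (fun S => centredEdgeIndicator n k S f) =
      Exu (kSets n k) fun S => centredEdgeIndicator n k S e := fun f hf => by
    simp only [centredEdgeIndicator, Exu_sub, edgeIndicator]
    rw [Exu_kSets_ite_subset_eq k]
    rw [Sym2.card_toFinset_of_not_isDiag _ (mem_completeEdges.1 he),
      Sym2.card_toFinset_of_not_isDiag _ (mem_completeEdges.1 hf)]
  rw [sum_congr rfl hsymm, sum_const, nsmul_eq_mul, card_completeEdges_eq_Nr] at hsum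
  exact (mul_eq_zero.1 hsum).resolve_left (Nr_pos hn).ne'

lemma Exu_centredEdgeIndicator_mul_eq (hn : 2 ≤ n) {e f f' : Sym2 (Fin n)}
    (hf : f ∈ completeEdges n) (hf' : f' ∈ completeEdges n) (hef : Disjoint e.toFinset f.toFinset)
    (hef' : Disjoint e.toFinset f'.toFinset) :
    (Exu (kSets n k) fun S => centredEdgeIndicator n k S e * centredEdgeIndicator n k S f) =
      Exu (kSets n k) fun S => centredEdgeIndicator n k S e * centredEdgeIndicator n k S f' := by
  have hexpand : ∀ f ∈ completeEdges n,
      (Exu (kSets n k) fun S => centredEdgeIndicator n k S e * centredEdgeIndicator n k S f) =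
        (Exu (kSets n k) fun S => if e.toFinset ∪ f.toFinset ⊆ S then (1 : ℝ) else 0) -
          Kr k / Nr n * Exu (kSets n k) fun S => edgeIndicator S e := fun f hf => by
    have hpoint : ∀ S, centredEdgeIndicator n k S e * centredEdgeIndicator n k S f =
        (if e.toFinset ∪ f.toFinset ⊆ S then (1 : ℝ) else 0) - Kr k / Nr n * edgeIndicator S e -
          Kr k / Nr n * centredEdgeIndicator n k S f := fun S => by
      rw [← edgeIndicator_mul_edgeIndicator]
      simp only [centredEdgeIndicator]
      ring
    simp only [hpoint, Exu_sub, Exu_const_mul, Exu_centredEdgeIndicator hn hf, mul_zero, sub_zero]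
  have hcard : #(e.toFinset ∪ f.toFinset) = #(e.toFinset ∪ f'.toFinset) := by
    rw [card_union_of_disjoint hef, card_union_of_disjoint hef',
      Sym2.card_toFinset_of_not_isDiag _ (mem_completeEdges.1 hf),
      Sym2.card_toFinset_of_not_isDiag _ (mem_completeEdges.1 hf')]
  rw [hexpand f hf, hexpand f' hf', Exu_kSets_ite_subset_eq k hcard]

lemma card_filter_not_disjoint_toFinset_le (e : Sym2 (Fin n)) (E : Finset (Sym2 (Fin n))) :
    #{f ∈ E | ¬ Disjoint e.toFinset f.toFinset} ≤ 2 * n := by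
  induction e using Sym2.ind with
  | _ a b =>
    have hsub : {f ∈ E | ¬ Disjoint (s(a, b)).toFinset f.toFinset} ⊆
        (univ.image fun x => s(a, x)) ∪ univ.image fun x => s(b, x) := fun f hf => by
      obtain ⟨x, hx, hxf⟩ := not_disjoint_iff.1 (mem_filter.1 hf).2
      rw [Sym2.mem_toFinset] at hx hxf
      obtain ⟨y, rfl⟩ := hxf
      rcases Sym2.mem_iff.1 hx with rfl | rfl
      · exact mem_union_left _ (mem_image_of_mem _ (mem_univ _))
      · exact mem_union_right _ (mem_image_of_mem _ (mem_univ _))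
    have hstar : ∀ v : Fin n, #(univ.image fun x => s(v, x)) ≤ n := fun v =>
      card_image_le.trans_eq (card_fin n)
    linarith [card_le_card hsub, card_union_le (univ.image fun x => s(a, x))
      (univ.image fun x => s(b, x)), hstar a, hstar b]

lemma sum_abs_le_two_mul_sum_filter_abs {ι : Type*} {s : Finset ι} {g : ι → ℝ} (P : ι → Prop)
    [DecidablePred P] (hsum : ∑ i ∈ s, g i = 0)
    (hconst : ∀ i ∈ s, ∀ j ∈ s, ¬ P i → ¬ P j → g i = g j) :
    ∑ i ∈ s, |g i| ≤ 2 * ∑ i ∈ s with P i, |g i| := by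
  have hsplit := sum_filter_add_sum_filter_not s P g
  have hcompl : ∑ i ∈ s with ¬ P i, |g i| = |∑ i ∈ s with ¬ P i, g i| := by
    rcases (s.filter fun i => ¬ P i).eq_empty_or_nonempty with h | ⟨j, hj⟩
    · rw [h, sum_empty, sum_empty, abs_zero]
    · have hj := mem_filter.1 hj
      have heq : ∀ i ∈ s.filter fun i => ¬ P i, g i = g j := fun i hi =>
        hconst i (mem_filter.1 hi).1 j hj.1 (mem_filter.1 hi).2 hj.2
      rw [sum_congr rfl heq, sum_congr rfl fun i hi => congrArg abs (heq i hi)]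
      simp [abs_mul]
  have hle : |∑ i ∈ s with ¬ P i, g i| ≤ ∑ i ∈ s with P i, |g i| := by
    rw [eq_neg_of_add_eq_zero_right (hsplit.trans hsum), abs_neg]
    exact abs_sum_le_sum_abs _ _
  rw [← sum_filter_add_sum_filter_not s P, hcompl]
  linarith

-- All edges disjoint from `e` have the same covariance with `e`, and each row of the covariance
-- matrix sums to zero, so the row is controlled by the at most `2n` edges that touch `e`.
lemma sum_abs_Exu_centredEdgeIndicator_mul_le (hn : 2 ≤ n) (hk : k ≤ n) (e : Sym2 (Fin n)) :
    ∑ f ∈ completeEdges n,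
      |Exu (kSets n k) fun S => centredEdgeIndicator n k S e * centredEdgeIndicator n k S f| ≤
      4 * n := by
  set R : Sym2 (Fin n) → ℝ := fun f =>
    Exu (kSets n k) fun S => centredEdgeIndicator n k S e * centredEdgeIndicator n k S f
  have hsum : ∑ f ∈ completeEdges n, R f = 0 := by
    rw [← Exu_sum, Exu, sum_eq_zero fun S hS => ?_, zero_div]
    rw [← mul_sum, sum_centredEdgeIndicator hn hS, mul_zero]
  have hR : ∀ f, |R f| ≤ 1 := fun f => abs_Exu_le (kSets_nonempty hk) fun S _ => by
    rw [abs_mul]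
    exact mul_le_one₀ (abs_centredEdgeIndicator_le hk _ _) (abs_nonneg _)
      (abs_centredEdgeIndicator_le hk _ _)
  calc ∑ f ∈ completeEdges n, |R f|
      ≤ 2 * ∑ f ∈ completeEdges n with ¬ Disjoint e.toFinset f.toFinset, |R f| :=
        sum_abs_le_two_mul_sum_filter_abs _ hsum fun f hf f' hf' hd hd' =>
          Exu_centredEdgeIndicator_mul_eq hn hf hf' (not_not.1 hd) (not_not.1 hd')
    _ ≤ 2 * #{f ∈ completeEdges n | ¬ Disjoint e.toFinset f.toFinset} := by
        rw [← nsmul_one #_]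
        gcongr
        exact sum_le_card_nsmul _ _ _ fun f _ => hR f
    _ ≤ 2 * (2 * n) := by
        gcongr
        exact_mod_cast card_filter_not_disjoint_toFinset_le e (completeEdges n)
    _ = 4 * n := by ring

end CentredEdgeIndicator

/-! ### Comparison of variances -/

section Variance

variable {n k : ℕ}

lemma lamP_eq_mul (hn : 2 ≤ n) (M k : ℕ) :
    lamP n M k = (M / Nr n * (1 - M / Nr n)) * ((1 - (k / n : ℝ) ^ 2) * (k / n : ℝ) ^ 2 / 2) := by
  have hN := (Nr_pos hn).ne'
  have hn₀ : (n : ℝ) ≠ 0 := by positivity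
  rw [lamP]
  field_simp

lemma lamP_lower_bound (hn : 2 ≤ n) {M : ℕ} {δ : ℝ} (hδ : 0 < δ)
    (hM₁ : δ ≤ M / Nr n) (hM₂ : M / Nr n ≤ 1 - δ) (hk₁ : δ ≤ k / n) (hk₂ : (k : ℝ) / n ≤ 1 - δ) :
    δ ^ 5 / 2 ≤ lamP n M k := by
  rw [lamP_eq_mul hn]
  set κ := (k : ℝ) / n
  set p := (M : ℝ) / Nr n
  have hp : δ * δ ≤ p * (1 - p) := mul_le_mul hM₁ (by linarith) hδ.le (by linarith)
  have hκ : δ ≤ 1 - κ ^ 2 := by nlinarith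
  have hκ' : δ * δ ^ 2 ≤ (1 - κ ^ 2) * κ ^ 2 :=
    mul_le_mul hκ (by gcongr) (by positivity) (hδ.le.trans hκ)
  calc δ ^ 5 / 2 = δ * δ * (δ * δ ^ 2 / 2) := by ring
    _ ≤ p * (1 - p) * ((1 - κ ^ 2) * κ ^ 2 / 2) :=
        mul_le_mul hp (by gcongr) (by positivity) ((mul_pos hδ hδ).le.trans hp)

lemma abs_Kr_mul_div_sub_le (hn : 2 ≤ n) (hk : k ≤ n) :
    |Kr k * (Nr n - Kr k) / Nr n - (1 - (k / n : ℝ) ^ 2) * (k / n : ℝ) ^ 2 / 2 * (n : ℝ) ^ 2| ≤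
      (2 * n : ℝ) := by
  have hn' : (2 : ℝ) ≤ n := by exact_mod_cast hn
  have hk' : (k : ℝ) ≤ n := by exact_mod_cast hk
  have hnk : (0 : ℝ) ≤ n - k := sub_nonneg.2 hk'
  have : (0 : ℝ) < n := by linarith
  have hn₁ : (0 : ℝ) < n - 1 := by linarith
  have hfactor : (1 - (k / n : ℝ) ^ 2) * (k / n : ℝ) ^ 2 / 2 * (n : ℝ) ^ 2 -
      Kr k * (Nr n - Kr k) / Nr n =
      ((n : ℝ) - k) * k / (2 * n) * ((k * (n - k) + n * (n - 1)) / (n * (n - 1))) := by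
    rw [Kr, Nr]
    have := hn₁.ne'
    field_simp
    ring
  have hleft : ((n : ℝ) - k) * k / (2 * n) ≤ n / 2 := by
    rw [div_le_div_iff₀ (by positivity) (by norm_num)]
    nlinarith
  have hright : ((k : ℝ) * (n - k) + n * (n - 1)) / (n * (n - 1)) ≤ 4 := by
    rw [div_le_iff₀ (by positivity)]
    nlinarith [sq_nonneg (k : ℝ), mul_le_mul_of_nonneg_left hk' hnk]
  rw [abs_sub_comm, hfactor, abs_of_nonneg (by positivity)]
  calc ((n : ℝ) - k) * k / (2 * n) * ((k * (n - k) + n * (n - 1)) / (n * (n - 1)))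
      ≤ n / 2 * 4 := by gcongr
    _ = 2 * n := by ring

lemma abs_variance_sub_lamP_mul_sq_le (hn : 2 ≤ n) (hk : k ≤ n) {M : ℕ}
    (hp : (M : ℝ) / Nr n ∈ Set.Icc (0 : ℝ) 1) :
    |M / Nr n * (1 - M / Nr n) * (Kr k * (Nr n - Kr k) / Nr n) - lamP n M k * (n : ℝ) ^ 2| ≤
      (2 * n : ℝ) := by
  have hp' := sub_nonneg.2 hp.2
  rw [lamP_eq_mul hn, mul_assoc (_ * _), ← mul_sub, abs_mul, abs_of_nonneg (mul_nonneg hp.1 hp')]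
  exact (mul_le_of_le_one_left (abs_nonneg _)
    (mul_le_one₀ hp.2 hp' (sub_le_self _ hp.1))).trans (abs_Kr_mul_div_sub_le hn hk)

end Variance

/-! ### From smooth test functions to intervals -/

section SmoothCutoff

/-- A smoothed indicator of `(-∞, z]`, decreasing from `1` to `0` on `[z, z + L]`. -/
def smoothCutoff (z L x : ℝ) : ℝ := smoothStep ((x - z) / L)

variable {z L : ℝ}

lemma smoothCutoff_add_left (z L μ x : ℝ) :
    smoothCutoff z L (μ + x) = smoothCutoff (z - μ) L x := by
  simp only [smoothCutoff]
  congr 2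
  ring

lemma continuous_smoothCutoff : Continuous (smoothCutoff z L) :=
  (contDiff_smoothStep (n := 0)).continuous.comp (by fun_prop)

lemma indicator_Iic_le_smoothCutoff (hL : 0 < L) (x : ℝ) :
    (Set.Iic z).indicator 1 x ≤ smoothCutoff z L x := by
  by_cases hx : x ∈ Set.Iic z
  · rw [Set.indicator_of_mem hx, smoothCutoff,
      smoothStep_of_nonpos (div_nonpos_of_nonpos_of_nonneg (sub_nonpos.2 hx) hL.le), Pi.one_apply]
  · rw [Set.indicator_of_notMem hx]
    exact (smoothStep_mem_Icc _).1

lemma smoothCutoff_le_indicator_Iic (hL : 0 < L) (x : ℝ) :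
    smoothCutoff z L x ≤ (Set.Iic (z + L)).indicator 1 x := by
  by_cases hx : x ∈ Set.Iic (z + L)
  · rw [Set.indicator_of_mem hx]
    exact (smoothStep_mem_Icc _).2
  · rw [Set.indicator_of_notMem hx, smoothCutoff,
      smoothStep_of_one_le ((one_le_div hL).2 (by linarith [not_le.1 (Set.mem_Iic.not.1 hx)]))]

section Measure

variable {γ : Measure ℝ} [IsProbabilityMeasure γ]

lemma integrable_smoothCutoff : Integrable (smoothCutoff z L) γ :=
  integrable_of_continuous_of_abs_le continuous_smoothCutoff (C := 1) fun x =>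
    (abs_of_nonneg (smoothStep_mem_Icc _).1).trans_le (smoothStep_mem_Icc ((x - z) / L)).2

lemma measureReal_Iic_le_integral_smoothCutoff (hL : 0 < L) :
    γ.real (Set.Iic z) ≤ ∫ x, smoothCutoff z L x ∂γ := by
  rw [← integral_indicator_one measurableSet_Iic]
  exact integral_mono ((integrable_const 1).indicator measurableSet_Iic) integrable_smoothCutoff
    (indicator_Iic_le_smoothCutoff hL)

lemma integral_smoothCutoff_le_measureReal_Iic (hL : 0 < L) :
    ∫ x, smoothCutoff z L x ∂γ ≤ γ.real (Set.Iic (z + L)) := by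
  rw [← integral_indicator_one measurableSet_Iic]
  exact integral_mono integrable_smoothCutoff ((integrable_const 1).indicator measurableSet_Iic)
    (smoothCutoff_le_indicator_Iic hL)

end Measure

section UniformAverage

variable {ω : Type*} {Ω : Finset ω}

lemma Pru_le_Exu_smoothCutoff (hL : 0 < L) (X : ω → ℝ) :
    Pru Ω (fun S => X S ≤ z) ≤ Exu Ω fun S => smoothCutoff z L (X S) := by
  rw [Pru_eq_Exu]
  exact Exu_mono fun S _ => indicator_Iic_le_smoothCutoff hL (X S)

lemma Exu_smoothCutoff_le_Pru (hL : 0 < L) (X : ω → ℝ) :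
    (Exu Ω fun S => smoothCutoff z L (X S)) ≤ Pru Ω fun S => X S ≤ z + L := by
  rw [Pru_eq_Exu]
  exact Exu_mono fun S _ => smoothCutoff_le_indicator_Iic hL (X S)

end UniformAverage

lemma measureReal_Icc_eq_sub {γ : Measure ℝ} [IsProbabilityMeasure γ] [NullSingletonClass γ]
    {a b : ℝ} (hab : a ≤ b) : γ.real (Set.Icc a b) = γ.real (Set.Iic b) - γ.real (Set.Iic a) := by
  rw [← measureReal_congr Ioc_ae_eq_Icc, ← Set.Iic_sdiff_Iic,
    measureReal_sdiff (Set.Iic_subset_Iic.2 hab) measurableSet_Iic]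

section Comparison

variable {ω : Type*} {Ω : Finset ω} {γ : Measure ℝ} [IsProbabilityMeasure γ] {β ρ : ℝ}
  (hγ : ∀ a b : ℝ, a ≤ b → γ.real (Set.Icc a b) ≤ (b - a) * ρ)

include hγ in
lemma abs_Pru_le_sub_measureReal_Iic_le [NullSingletonClass γ] (hL : 0 < L) (X : ω → ℝ) (x : ℝ)
    (hX : ∀ z ∈ ({x, x - L} : Set ℝ),
      |(Exu Ω fun S => smoothCutoff z L (X S)) - ∫ w, smoothCutoff z L w ∂γ| ≤ β) :
    |Pru Ω (fun S => X S ≤ x) - γ.real (Set.Iic x)| ≤ β + L * ρ := by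
  have hupper := abs_le.1 (hX x (by simp))
  have hlower := abs_le.1 (hX (x - L) (by simp))
  have hP := Pru_le_Exu_smoothCutoff (Ω := Ω) (z := x) hL X
  have hP' := Exu_smoothCutoff_le_Pru (Ω := Ω) (z := x - L) hL X
  have hI := integral_smoothCutoff_le_measureReal_Iic (γ := γ) (z := x) hL
  have hI' := measureReal_Iic_le_integral_smoothCutoff (γ := γ) (z := x - L) hL
  have hmass := hγ x (x + L) (by linarith)
  have hmass' := hγ (x - L) x (by linarith)
  rw [measureReal_Icc_eq_sub (by linarith)] at hmass hmass'
  rw [sub_add_cancel] at hP'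
  exact abs_le.2 ⟨by linarith, by linarith⟩

lemma abs_Pru_le_sub_measureReal_Iic_le_of_forall_mem_Icc (hΩ : Ω.Nonempty) {X : ω → ℤ} {a b : ℤ}
    (hX : ∀ S ∈ Ω, X S ∈ Set.Ioc a b)
    (hgrid : ∀ j ∈ Icc a b, |Pru Ω (fun S => (X S : ℝ) ≤ j) - γ.real (Set.Iic (j : ℝ))| ≤ β)
    (j : ℤ) : |Pru Ω (fun S => (X S : ℝ) ≤ j) - γ.real (Set.Iic (j : ℝ))| ≤ β := by
  classical
  obtain ⟨S₀, hS₀⟩ := hΩ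
  have hab : a ≤ b := (hX S₀ hS₀).1.le.trans (hX S₀ hS₀).2
  have hmono : ∀ i j : ℤ, i ≤ j → γ.real (Set.Iic (i : ℝ)) ≤ γ.real (Set.Iic (j : ℝ)) :=
    fun i j hij => measureReal_mono (Set.Iic_subset_Iic.2 (Int.cast_le.2 hij))
  have hleft : ∀ i ≤ a, Pru Ω (fun S => (X S : ℝ) ≤ i) = 0 := fun i hi => by
    rw [Pru, filter_false_of_mem fun S hS => ?_, card_empty, Nat.cast_zero, zero_div]
    exact not_le.2 (Int.cast_lt.2 (hi.trans_lt (hX S hS).1))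
  have hright : ∀ i, b ≤ i → Pru Ω (fun S => (X S : ℝ) ≤ i) = 1 := fun i hi => by
    rw [Pru, filter_true_of_mem fun S hS => Int.cast_le.2 ((hX S hS).2.trans hi),
      div_self (Nat.cast_ne_zero.2 (card_ne_zero_of_mem hS₀))]
  rcases le_total j a with hja | haj
  · have h := hgrid a (left_mem_Icc.2 hab)
    rw [hleft a le_rfl, zero_sub, abs_neg, abs_of_nonneg measureReal_nonneg] at h
    rw [hleft j hja, zero_sub, abs_neg, abs_of_nonneg measureReal_nonneg]
    exact (hmono j a hja).trans h
  rcases le_total j b with hjb | hbj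
  · exact hgrid j (mem_Icc.2 ⟨haj, hjb⟩)
  · have h := hgrid b (right_mem_Icc.2 hab)
    rw [hright b le_rfl, abs_of_nonneg (sub_nonneg.2 measureReal_le_one)] at h
    rw [hright j hbj, abs_of_nonneg (sub_nonneg.2 measureReal_le_one)]
    exact (sub_le_sub_left (hmono b j hbj) 1).trans h

lemma Pru_mem_Icc_eq_sub (X : ω → ℤ) {x y : ℝ} (hxy : x ≤ y) :
    Pru Ω (fun S => (X S : ℝ) ∈ Set.Icc x y) =
      Pru Ω (fun S => (X S : ℝ) ≤ ⌊y⌋) - Pru Ω fun S => (X S : ℝ) ≤ (⌈x⌉ - 1 : ℤ) := by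
  classical
  rw [Pru_eq_Exu, Pru_eq_Exu, Pru_eq_Exu, ← Exu_sub]
  congr 1 with S
  have hx : (X S : ℝ) ≤ (⌈x⌉ - 1 : ℤ) ↔ (X S : ℝ) < x := by
    rw [Int.cast_le, Int.le_sub_one_iff, Int.lt_ceil]
  have hy : (X S : ℝ) ≤ ⌊y⌋ ↔ (X S : ℝ) ≤ y := by rw [Int.cast_le, Int.le_floor]
  simp only [Set.mem_Icc, hx, hy, ← not_lt (b := x)]
  by_cases hlt : (X S : ℝ) < x
  · simp [hlt, hlt.le.trans hxy]
  · simp [hlt]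

include hγ in
lemma abs_Pru_mem_Icc_sub_measureReal_Icc_le [NullSingletonClass γ] {X : ω → ℤ}
    (hX : ∀ j : ℤ, |Pru Ω (fun S => (X S : ℝ) ≤ j) - γ.real (Set.Iic (j : ℝ))| ≤ β) {x y : ℝ}
    (hxy : x ≤ y) :
    |Pru Ω (fun S => (X S : ℝ) ∈ Set.Icc x y) - γ.real (Set.Icc x y)| ≤ 2 * β + ρ := by
  have hround : ∀ (j : ℤ) (w : ℝ), (j : ℝ) ≤ w → w ≤ j + 1 →
      γ.real (Set.Iic w) - γ.real (Set.Iic (j : ℝ)) ∈ Set.Icc 0 ρ := fun j w hjw hwj => by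
    refine ⟨sub_nonneg.2 (measureReal_mono (Set.Iic_subset_Iic.2 hjw)), ?_⟩
    have hmass := hγ j (j + 1) (by linarith)
    rw [measureReal_Icc_eq_sub (by linarith), add_sub_cancel_left, one_mul] at hmass
    linarith [measureReal_mono (μ := γ) (Set.Iic_subset_Iic.2 hwj)]
  have hfloor := hround ⌊y⌋ y (Int.floor_le y) (Int.lt_floor_add_one y).le
  have hceil := hround (⌈x⌉ - 1) x (by push_cast; linarith [Int.ceil_lt_add_one x])
    (by push_cast; linarith [Int.le_ceil x])
  rw [Pru_mem_Icc_eq_sub X hxy, measureReal_Icc_eq_sub hxy]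
  have hb := abs_le.1 (hX ⌊y⌋)
  have ha := abs_le.1 (hX (⌈x⌉ - 1))
  exact abs_le.2 ⟨by linarith [hfloor.1, hfloor.2, hceil.1, hceil.2],
    by linarith [hfloor.1, hfloor.2, hceil.1, hceil.2]⟩

end Comparison

end SmoothCutoff

/-! ### The error bound in the random graph -/

section RandomGraph

variable {n M k : ℕ}

/-- The points at which the smoothed distribution functions are compared. For `a = -1` and
`b = n(n-1)/2` they reach every integer value of `e(S)` from both sides. -/
def thresholds (a b : ℤ) (L : ℝ) : Finset ℝ :=
  image₂ (fun (j : ℤ) x => (j : ℝ) - x) (Icc a b) {0, L}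

lemma card_thresholds_le (n : ℕ) (L : ℝ) :
    (#(thresholds (-1) (n.choose 2) L) : ℝ) ≤ 2 * (Nr n + 2) := by
  have h : #(thresholds (-1) (n.choose 2) L) ≤ (n.choose 2 + 2) * 2 := by
    refine (card_image₂_le _ _ _).trans (Nat.mul_le_mul (le_of_eq ?_) card_le_two)
    rw [Int.card_Icc]
    omega
  rw [Nr_eq_choose, mul_comm]
  exact_mod_cast h

/-- An upper bound for the distance between the smoothed distribution function of `e(S)` at scale
`L` and that of its normal approximation, when the former is within `t` of its mean over the graph:
the second term is the Lindeberg error and the third comes from replacing the variance of the linear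
statistic by `λ n²`. The test function has derivatives bounded by `A`. -/
def smoothedError (n : ℕ) (A L t : ℝ) : ℝ :=
  t + A / L ^ 3 * (1 + gaussianThirdMoment) * Nr n + A / L ^ 2 * (2 * n)

lemma TaylorBounded.binomialProb_lt_abs_testAverage_centredEdgeIndicator_le {f f' f'' : ℝ → ℝ}
    {A₁ A₂ A₃ : ℝ} (hf : TaylorBounded f f' f'' A₁ A₂ A₃) (hn : 2 ≤ n) (hk : k ≤ n)
    (hp : (M : ℝ) / Nr n ∈ Set.Icc (0 : ℝ) 1) {σ : ℝ} (hσ : 0 < σ)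
    (hσA : 2 * (4 * n) * A₁ ^ 2 + 2 * Nr n * A₂ ^ 2 ≤ σ ^ 2) (t : ℝ) :
    binomialProb (M / Nr n) (completeEdges n) (fun G =>
      t + A₃ * (1 + gaussianThirdMoment) * Nr n + A₂ * (2 * n) <
        |testAverage (kSets n k) (completeEdges n) (centredEdgeIndicator n k) (M / Nr n) f G -
          ∫ y, f y ∂(gaussianReal 0 (lamP n M k * (n : ℝ) ^ 2).toNNReal)|) ≤
      2 * Real.exp (1 - t / σ) := by
  have hA₂ : 0 ≤ A₂ := (abs_nonneg _).trans (hf.abs_snd_le 0)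
  set v := M / Nr n * (1 - M / Nr n) * (Kr k * (Nr n - Kr k) / Nr n)
  have hvariance : |∫ y, f y ∂(gaussianReal 0 v.toNNReal) -
      ∫ y, f y ∂(gaussianReal 0 (lamP n M k * (n : ℝ) ^ 2).toNNReal)| ≤ A₂ * (2 * n) := by
    have h := hf.abs_integral_gaussianReal_sub_le v.toNNReal (lamP n M k * (n : ℝ) ^ 2).toNNReal 0
    simp only [zero_add, Real.coe_toNNReal'] at h
    exact h.trans (mul_le_mul_of_nonneg_left ((abs_max_sub_max_le_abs _ _ _).trans
      (abs_variance_sub_lamP_mul_sq_le hn hk hp)) hA₂)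
  rw [← card_completeEdges_eq_Nr n] at hσA
  refine (binomialProb_mono hp fun G _ hG => ?_).trans
    (hf.binomialProb_lt_abs_testAverage_sub_le (kSets_nonempty hk)
      (fun S _ e _ => abs_centredEdgeIndicator_le hk S e) hp
      (fun S hS => sum_sq_centredEdgeIndicator hn hS) (by positivity)
      (fun e _ => sum_abs_Exu_centredEdgeIndicator_mul_le hn hk e) hσ hσA t)
  rw [card_completeEdges_eq_Nr]
  linarith [abs_sub_le
    (testAverage (kSets n k) (completeEdges n) (centredEdgeIndicator n k) (M / Nr n) f G)
    (∫ y, f y ∂(gaussianReal 0 v.toNNReal))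
    (∫ y, f y ∂(gaussianReal 0 (lamP n M k * (n : ℝ) ^ 2).toNNReal))]

lemma testAverage_centredEdgeIndicator (hn : 2 ≤ n) {G : Finset (Sym2 (Fin n))}
    (hG : G ∈ graphsM n M) (p z L : ℝ) :
    testAverage (kSets n k) (completeEdges n) (centredEdgeIndicator n k) p
      (smoothCutoff (z - muP n M k) L) G =
      Exu (kSets n k) fun S => smoothCutoff z L (edgesIn G S) := by
  rw [testAverage, Exu, Exu]
  congr 1
  refine sum_congr rfl fun S hS => ?_
  rw [← smoothCutoff_add_left, muP_add_centredSum hn hS hG]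

variable {A L σ : ℝ}
  (hA : TaylorBounded smoothStep (deriv smoothStep) (deriv (deriv smoothStep)) A A A)

include hA

lemma PrGnM_exists_smoothedError_lt_le (hn : 2 ≤ n) (hk : k ≤ n)
    (hp : (M : ℝ) / Nr n ∈ Set.Icc (0 : ℝ) 1) (hL : 0 < L) (hσ : 0 < σ)
    (hσA : 2 * (4 * n) * (A / L) ^ 2 + 2 * Nr n * (A / L ^ 2) ^ 2 ≤ σ ^ 2) (t : ℝ)
    (Z : Finset ℝ) :
    PrGnM n M (fun G => ∃ z ∈ Z, smoothedError n A L t <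
      |(Exu (kSets n k) fun S => smoothCutoff z L (edgesIn G S)) -
        ∫ w, smoothCutoff z L w ∂(gaussianReal (muP n M k)
          (lamP n M k * (n : ℝ) ^ 2).toNNReal)|) ≤
      (Nr n + 1) * (#Z * (2 * Real.exp (1 - t / σ))) := by
  have hN := Nr_pos hn
  set μ := muP n M k
  set v := (lamP n M k * (n : ℝ) ^ 2).toNNReal
  set bad : ℝ → Finset (Sym2 (Fin n)) → Prop := fun z G => smoothedError n A L t <
    |testAverage (kSets n k) (completeEdges n) (centredEdgeIndicator n k) (M / Nr n)
      (smoothCutoff (z - μ) L) G - ∫ y, smoothCutoff (z - μ) L y ∂(gaussianReal 0 v)|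
  have hbad : ∀ z, binomialProb (M / Nr n) (completeEdges n) (bad z) ≤
      2 * Real.exp (1 - t / σ) := fun z =>
    (hA.rescale (z - μ) hL).binomialProb_lt_abs_testAverage_centredEdgeIndicator_le hn hk hp hσ
      hσA t
  have htransfer : PrGnM n M (fun G => ∃ z ∈ Z, bad z G) ≤
      (Nr n + 1) * binomialProb (M / Nr n) (completeEdges n) fun G => ∃ z ∈ Z, bad z G := by
    rw [PrGnM, graphsM_eq_powersetCard, ← card_completeEdges_eq_Nr]
    exact Pru_powersetCard_le (by rwa [card_completeEdges_eq_Nr])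
      (by rw [card_completeEdges_eq_Nr, mul_div_cancel₀ _ hN.ne']) _
  have hevent : ∀ G ∈ graphsM n M, (∃ z ∈ Z, smoothedError n A L t <
      |(Exu (kSets n k) fun S => smoothCutoff z L (edgesIn G S)) -
        ∫ w, smoothCutoff z L w ∂(gaussianReal μ v)|) → ∃ z ∈ Z, bad z G := by
    rintro G hG ⟨z, hz, h⟩
    refine ⟨z, hz, ?_⟩
    simpa only [bad, μ, testAverage_centredEdgeIndicator hn hG, ← smoothCutoff_add_left,
      integral_translate_gaussianReal continuous_smoothCutoff] using h
  refine (Pru_mono hevent).trans (htransfer.trans (mul_le_mul_of_nonneg_left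
    ((binomialProb_exists_le_sum hp Z bad).trans ?_) (by linarith)))
  simpa only [sum_const, nsmul_eq_mul] using sum_le_sum fun z (_ : z ∈ Z) => hbad z

omit hA in
lemma abs_Pru_edgesIn_mem_Icc_sub_le {γ : Measure ℝ} [IsProbabilityMeasure γ]
    [NullSingletonClass γ] {ρ β : ℝ}
    (hγ : ∀ a b : ℝ, a ≤ b → γ.real (Set.Icc a b) ≤ (b - a) * ρ) (hk : k ≤ n) (hL : 0 < L)
    {G : Finset (Sym2 (Fin n))} (hG : G ∈ graphsM n M)
    (hsmooth : ∀ z ∈ thresholds (-1) (n.choose 2) L,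
      |(Exu (kSets n k) fun S => smoothCutoff z L (edgesIn G S)) - ∫ w, smoothCutoff z L w ∂γ| ≤ β)
    {x y : ℝ} (hxy : x ≤ y) :
    |Pru (kSets n k) (fun S => (edgesIn G S : ℝ) ∈ Set.Icc x y) - γ.real (Set.Icc x y)| ≤
      2 * (β + L * ρ) + ρ := by
  have hrange : ∀ S ∈ kSets n k, (edgesIn G S : ℤ) ∈ Set.Ioc (-1 : ℤ) (n.choose 2) := fun S _ => by
    rw [graphsM_eq_powersetCard, mem_powersetCard] at hG
    refine ⟨by omega, ?_⟩
    rw [← card_completeEdges]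
    exact_mod_cast (edgesIn_le_card G S).trans (card_le_card hG.1)
  have hgrid : ∀ j ∈ Icc (-1 : ℤ) (n.choose 2),
      |Pru (kSets n k) (fun S => ((edgesIn G S : ℤ) : ℝ) ≤ j) - γ.real (Set.Iic (j : ℝ))| ≤
        β + L * ρ := fun j hj =>
    abs_Pru_le_sub_measureReal_Iic_le hγ hL _ j fun z hz => by
      simp only [Int.cast_natCast]
      refine hsmooth z ?_
      rcases hz with rfl | rfl
      · exact mem_image₂.2 ⟨j, hj, 0, by simp, sub_zero _⟩
      · exact mem_image₂_of_mem hj (by simp)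
  simpa only [Int.cast_natCast] using abs_Pru_mem_Icc_sub_measureReal_Icc_le hγ
    (abs_Pru_le_sub_measureReal_Iic_le_of_forall_mem_Icc (kSets_nonempty hk) hrange hgrid) hxy

theorem one_sub_le_PrGnM_forall_abs_sub_gaussMeas_le (hn : 2 ≤ n) (hk : k ≤ n)
    (hp : (M : ℝ) / Nr n ∈ Set.Icc (0 : ℝ) 1) (hlam : 0 < lamP n M k) (hL : 0 < L) (hσ : 0 < σ)
    (hσA : 2 * (4 * n) * (A / L) ^ 2 + 2 * Nr n * (A / L ^ 2) ^ 2 ≤ σ ^ 2) (t : ℝ) {ρ : ℝ}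
    (hρ : (√(2 * Real.pi * (lamP n M k * (n : ℝ) ^ 2)))⁻¹ ≤ ρ) :
    1 - (Nr n + 1) * (2 * (Nr n + 2) * (2 * Real.exp (1 - t / σ))) ≤
      PrGnM n M fun G => ∀ z₀ z₁ : ℝ, z₀ ≤ z₁ →
        |Pru (kSets n k) (fun S => (edgesIn G S : ℝ) ∈ Set.Icc z₀ z₁) -
          gaussMeas (muP n M k) (lamP n M k * (n : ℝ) ^ 2) (Set.Icc z₀ z₁)| ≤
          2 * (smoothedError n A L t + L * ρ) + ρ := by
  have hN := Nr_pos hn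
  have hv : 0 < lamP n M k * (n : ℝ) ^ 2 := by positivity
  have hv' : (lamP n M k * (n : ℝ) ^ 2).toNNReal ≠ 0 := (Real.toNNReal_pos.2 hv).ne'
  have hγ : ∀ a b : ℝ, a ≤ b → (gaussianReal (muP n M k)
      (lamP n M k * (n : ℝ) ^ 2).toNNReal).real (Set.Icc a b) ≤ (b - a) * ρ := fun a b hab => by
    have h := gaussianReal_real_Icc_le (muP n M k) hv' hab
    rw [Real.coe_toNNReal _ hv.le] at h
    exact h.trans (mul_le_mul_of_nonneg_left hρ (sub_nonneg.2 hab))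
  have : NullSingletonClass (gaussianReal (muP n M k) (lamP n M k * (n : ℝ) ^ 2).toNNReal) :=
    nullSingletonClass_gaussianReal hv'
  have hbad := (PrGnM_exists_smoothedError_lt_le hA hn hk hp hL hσ hσA t
    (thresholds (-1) (n.choose 2) L)).trans (mul_le_mul_of_nonneg_left
      (mul_le_mul_of_nonneg_right (card_thresholds_le n L) (by positivity)) (by linarith))
  have hne : (graphsM n M).Nonempty := by
    rw [graphsM_eq_powersetCard, powersetCard_nonempty, card_completeEdges, ← Nat.cast_le (α := ℝ),
      ← Nr_eq_choose]
    exact (div_le_one hN).1 hp.2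
  rw [PrGnM, ← one_sub_Pru_not hne]
  refine sub_le_sub_left ((Pru_mono fun G hG hfail => ?_).trans hbad) 1
  contrapose! hfail
  exact fun z₀ z₁ hz => abs_Pru_edgesIn_mem_Icc_sub_le hγ hk hL hG hfail hz

end RandomGraph

/-! ### Choice of parameters -/

section Parameters

variable {n : ℕ}

lemma two_mul_Nr_le (n : ℕ) : 2 * Nr n ≤ (n : ℝ) ^ 2 := by
  rw [Nr]
  nlinarith [Nat.cast_nonneg (α := ℝ) n]

lemma variance_proxy_le {q : ℝ} (hq : 1 ≤ q) (hn : (n : ℝ) = q ^ 4) (A : ℝ) :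
    2 * (4 * n) * (A / q ^ 3) ^ 2 + 2 * Nr n * (A / (q ^ 3) ^ 2) ^ 2 ≤ (3 * A / q) ^ 2 := by
  have : 0 < q := by linarith
  calc 2 * (4 * n) * (A / q ^ 3) ^ 2 + 2 * Nr n * (A / (q ^ 3) ^ 2) ^ 2
      ≤ 2 * (4 * n) * (A / q ^ 3) ^ 2 + (n : ℝ) ^ 2 * (A / (q ^ 3) ^ 2) ^ 2 := by
        gcongr
        exact two_mul_Nr_le n
    _ = (A / q) ^ 2 * (8 + 1 / q ^ 2) := by
        rw [hn]
        field_simp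
        ring
    _ ≤ (A / q) ^ 2 * (8 + 1) := by
        gcongr
        exact (div_le_one (by positivity)).2 (one_le_pow₀ hq)
    _ = (3 * A / q) ^ 2 := by ring

lemma two_mul_smoothedError_add_le {q y A C : ℝ} (hq : 1 ≤ q) (hn : (n : ℝ) = q ^ 4) (hy : 1 ≤ y)
    (hA : 0 ≤ A) (hC : 0 ≤ C) (hyC : 2 + A * (1 + gaussianThirdMoment) + 4 * A + 3 * C ≤ y) :
    2 * (smoothedError n A (q ^ 3) (y ^ 2 / q) + q ^ 3 * (C / n)) + C / n ≤ y ^ 4 / q := by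
  have : 0 < q := by linarith
  have hm := gaussianThirdMoment_nonneg
  have hinv : ∀ m : ℕ, 1 / q ^ m ≤ 1 := fun m => (div_le_one (by positivity)).2 (one_le_pow₀ hq)
  calc 2 * (smoothedError n A (q ^ 3) (y ^ 2 / q) + q ^ 3 * (C / n)) + C / n
      = 2 * (y ^ 2 / q) + A / (q ^ 3) ^ 3 * (1 + gaussianThirdMoment) * (2 * Nr n) +
          2 * (A / (q ^ 3) ^ 2 * (2 * n)) + 2 * (q ^ 3 * (C / n)) + C / n := by
        rw [smoothedError]
        ring
    _ ≤ 2 * (y ^ 2 / q) + A / (q ^ 3) ^ 3 * (1 + gaussianThirdMoment) * (n : ℝ) ^ 2 +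
          2 * (A / (q ^ 3) ^ 2 * (2 * n)) + 2 * (q ^ 3 * (C / n)) + C / n := by
        gcongr
        exact two_mul_Nr_le n
    _ = (2 * y ^ 2 + A * (1 + gaussianThirdMoment) + 4 * A * (1 / q ^ 1) + 2 * C +
          C * (1 / q ^ 3)) / q := by
        rw [hn]
        field_simp
        ring
    _ ≤ (2 * y ^ 2 + A * (1 + gaussianThirdMoment) + 4 * A * 1 + 2 * C + C * 1) / q := by
        gcongr <;> exact hinv _
    _ ≤ y ^ 4 / q := by
        gcongr
        have hy₂ : 1 ≤ y ^ 2 := one_le_pow₀ hy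
        have hconst : 0 ≤ A * (1 + gaussianThirdMoment) + 4 * A + 3 * C := by positivity
        have hyy : y ≤ y ^ 2 := le_self_pow₀ hy two_ne_zero
        nlinarith [mul_le_mul_of_nonneg_left hy₂ hconst]

lemma cast_pow_four_le_exp_rpow (hn : 0 < n) {r : ℝ} (hr : 0 < r) :
    (n : ℝ) ^ 4 ≤ Real.exp (4 / r * (n : ℝ) ^ r) := by
  have hn' : (0 : ℝ) < n := by exact_mod_cast hn
  rw [← Real.exp_log (pow_pos hn' 4), Real.exp_le_exp, Real.log_pow]
  have hlog := Real.log_le_rpow_div hn'.le hr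
  push_cast
  calc 4 * Real.log n ≤ 4 * ((n : ℝ) ^ r / r) := by gcongr
    _ = 4 / r * (n : ℝ) ^ r := by ring

lemma union_bound_le_exp_neg (hn : 2 ≤ n) {r A : ℝ} (hr : 0 < r) (hA : 0 < A)
    (hy : 1 ≤ (n : ℝ) ^ r) (hyA : 3 * A * (4 + 4 / r) ≤ (n : ℝ) ^ r) :
    (Nr n + 1) * (2 * (Nr n + 2) * (2 * Real.exp (1 - ((n : ℝ) ^ r) ^ 2 / (3 * A)))) ≤
      Real.exp (-(n : ℝ) ^ r) := by
  have hn' : (2 : ℝ) ≤ n := by exact_mod_cast hn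
  have hN := Nr_pos hn
  have hN₁ : Nr n + 1 ≤ (n : ℝ) ^ 2 := by rw [Nr]; nlinarith
  have hN₂ : Nr n + 2 ≤ (n : ℝ) ^ 2 := by rw [Nr]; nlinarith
  have hfour := cast_pow_four_le_exp_rpow (n := n) (by omega) hr
  have hexp : (4 : ℝ) ≤ Real.exp 2 := by
    have h : (2 : ℝ) ≤ Real.exp 1 := by linarith [Real.add_one_le_exp (1 : ℝ)]
    have hsq : Real.exp 2 = Real.exp 1 ^ 2 := by rw [← Real.exp_nat_mul]; norm_num
    rw [hsq]
    nlinarith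
  set y := (n : ℝ) ^ r
  have hexponent : (4 + 4 / r) * y ≤ y ^ 2 / (3 * A) := by
    rw [le_div_iff₀ (by positivity)]
    nlinarith
  calc (Nr n + 1) * (2 * (Nr n + 2) * (2 * Real.exp (1 - y ^ 2 / (3 * A))))
      ≤ (n : ℝ) ^ 2 * (2 * (n : ℝ) ^ 2 * (2 * Real.exp (1 - y ^ 2 / (3 * A)))) := by gcongr
    _ = 4 * (n : ℝ) ^ 4 * Real.exp (1 - y ^ 2 / (3 * A)) := by ring
    _ ≤ Real.exp 2 * Real.exp (4 / r * y) * Real.exp (1 - y ^ 2 / (3 * A)) := by gcongr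
    _ = Real.exp (2 + 4 / r * y + (1 - y ^ 2 / (3 * A))) := by rw [Real.exp_add, Real.exp_add]
    _ ≤ Real.exp (-y) := by
        rw [Real.exp_le_exp]
        linarith

lemma inv_sqrt_two_pi_mul_le {c v : ℝ} (hc : 0 < c) (hv : c / 2 ≤ v) (hn : 0 < n) :
    (√(2 * Real.pi * (v * (n : ℝ) ^ 2)))⁻¹ ≤ (√c)⁻¹ / n := by
  have hn' : (0 : ℝ) < n := by exact_mod_cast hn
  have hcv : c ≤ 2 * Real.pi * v := by nlinarith [Real.pi_gt_three]
  rw [← mul_assoc, Real.sqrt_mul (hc.le.trans hcv), Real.sqrt_sq hn'.le, mul_inv, div_eq_mul_inv]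
  gcongr

lemma cast_rpow_neg_quarter_add (hn : 0 < n) (ε : ℝ) :
    (n : ℝ) ^ (-(1 / 4 : ℝ) + ε) = ((n : ℝ) ^ (ε / 4)) ^ 4 / (n : ℝ) ^ (1 / 4 : ℝ) := by
  have hn' : (0 : ℝ) < n := by exact_mod_cast hn
  rw [← Real.rpow_mul_natCast hn'.le, neg_add_eq_sub, Real.rpow_sub hn']
  norm_num

/-- With `q = n ^ (1/4)` and `y = n ^ (ε/4)` every power of `n` is a monomial. The choices are the
scale `L = q ^ 3`, the variance proxy `σ = 3 A / q` and the deviation `t = y ^ 2 / q`, against an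
admissible error `y ^ 4 / q`. -/
theorem one_sub_exp_le_PrGnM_forall_abs_sub_gaussMeas_le {M k : ℕ} {δ ε A : ℝ} (hδ : 0 < δ)
    (hε : 0 < ε) (hM₁ : δ ≤ M / Nr n) (hM₂ : M / Nr n ≤ 1 - δ) (hk₁ : δ ≤ k / n)
    (hk₂ : (k : ℝ) / n ≤ 1 - δ) (hA₀ : 0 < A)
    (hA : TaylorBounded smoothStep (deriv smoothStep) (deriv (deriv smoothStep)) A A A)
    (hn : 2 ≤ n) (hyA : 3 * A * (4 + 4 / (ε / 4)) ≤ (n : ℝ) ^ (ε / 4))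
    (hyC : 2 + A * (1 + gaussianThirdMoment) + 4 * A + 3 * (√(δ ^ 5))⁻¹ ≤ (n : ℝ) ^ (ε / 4)) :
    1 - Real.exp (-(n : ℝ) ^ (ε / 4)) ≤ PrGnM n M fun G => ∀ z₀ z₁ : ℝ, z₀ ≤ z₁ →
      |Pru (kSets n k) (fun S => (edgesIn G S : ℝ) ∈ Set.Icc z₀ z₁) -
        gaussMeas (muP n M k) (lamP n M k * (n : ℝ) ^ 2) (Set.Icc z₀ z₁)| ≤
        (n : ℝ) ^ (-(1 / 4 : ℝ) + ε) := by
  have hn₀ : 0 < n := by omega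
  have hn₁ : (1 : ℝ) ≤ n := by exact_mod_cast hn₀
  have hk : k ≤ n := by
    exact_mod_cast (div_le_one (by positivity)).1 (hk₂.trans (sub_le_self 1 hδ.le))
  have hp : (M : ℝ) / Nr n ∈ Set.Icc (0 : ℝ) 1 := ⟨hδ.le.trans hM₁, hM₂.trans (sub_le_self 1 hδ.le)⟩
  have hlam := lamP_lower_bound hn hδ hM₁ hM₂ hk₁ hk₂
  have hy : 1 ≤ (n : ℝ) ^ (ε / 4) := Real.one_le_rpow hn₁ (by positivity)
  have htail := union_bound_le_exp_neg hn (by positivity) hA₀ hy hyA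
  rw [cast_rpow_neg_quarter_add hn₀]
  set q := (n : ℝ) ^ (1 / 4 : ℝ) with hq_def
  set y := (n : ℝ) ^ (ε / 4)
  have hq : 1 ≤ q := Real.one_le_rpow hn₁ (by norm_num)
  have hqn : (n : ℝ) = q ^ 4 := by
    rw [hq_def, ← Real.rpow_mul_natCast (by positivity)]
    norm_num
  have herror := two_mul_smoothedError_add_le hq hqn hy hA₀.le (by positivity) hyC
  have hmain := one_sub_le_PrGnM_forall_abs_sub_gaussMeas_le hA hn hk hp
    ((by positivity : 0 < δ ^ 5 / 2).trans_le hlam) (by positivity : 0 < q ^ 3)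
    (by positivity : 0 < 3 * A / q) (variance_proxy_le hq hqn A) (y ^ 2 / q)
    (inv_sqrt_two_pi_mul_le (by positivity) hlam hn₀)
  rw [div_div_div_cancel_right₀ (by positivity)] at hmain
  exact (sub_le_sub_left htail 1).trans (hmain.trans (Pru_mono fun G _ h z₀ z₁ hz =>
    (h z₀ z₁ hz).trans herror))

end Parameters

/-- Corollary 3.1: interval version of the CLT.
Fix `δ, ε > 0`. There are `η > 0` and `n₀` such that for all `n ≥ n₀` and `M, k` with
`M/N, k/n ∈ [δ, 1-δ]`, with probability at least `1 - exp(-n^η)` over `G_{n,M}`: for all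
real `z₀ ≤ z₁`, `|P_S(e(S) ∈ [z₀, z₁]) - P(Z ∈ [z₀, z₁])| ≤ n^(-1/4+ε)` with
`Z ~ N(K·M/N, λ·n²)`. -/
theorem stmt_12 (δ ε : ℝ) (hδ : 0 < δ) (hε : 0 < ε) :
    ∃ η > (0:ℝ), ∃ n₀ : ℕ, ∀ n ≥ n₀, ∀ M k : ℕ,
      δ ≤ (M : ℝ) / Nr n → (M : ℝ) / Nr n ≤ 1 - δ →
      δ ≤ (k : ℝ) / n → (k : ℝ) / n ≤ 1 - δ →
      PrGnM n M (fun G => ∀ z₀ z₁ : ℝ, z₀ ≤ z₁ →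
          |Pru (kSets n k) (fun S => (edgesIn G S : ℝ) ∈ Set.Icc z₀ z₁) -
            gaussMeas (muP n M k) (lamP n M k * (n:ℝ) ^ 2) (Set.Icc z₀ z₁)|
          ≤ (n:ℝ) ^ (-(1/4 : ℝ) + ε))
        ≥ 1 - Real.exp (-(n:ℝ) ^ η) := by
  obtain ⟨A, hA₀, hA⟩ := exists_taylorBounded_smoothStep
  have hlarge : Filter.Tendsto (fun n : ℕ => (n : ℝ) ^ (ε / 4)) Filter.atTop Filter.atTop :=
    (tendsto_rpow_atTop (by positivity)).comp tendsto_natCast_atTop_atTop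
  obtain ⟨n₀, hn₀⟩ := Filter.eventually_atTop.1 ((Filter.eventually_ge_atTop 2).and
    ((hlarge.eventually_ge_atTop (3 * A * (4 + 4 / (ε / 4)))).and (hlarge.eventually_ge_atTop
      (2 + A * (1 + gaussianThirdMoment) + 4 * A + 3 * (√(δ ^ 5))⁻¹))))
  refine ⟨ε / 4, by positivity, n₀, fun n hn M k hM₁ hM₂ hk₁ hk₂ => ?_⟩
  obtain ⟨hn₂, hyA, hyC⟩ := hn₀ n hn
  exact one_sub_exp_le_PrGnM_forall_abs_sub_gaussMeas_le hδ hε hM₁ hM₂ hk₁ hk₂ hA₀ hA hn₂ hyA hyC
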